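/- arXiv:0711.3049 — 5 statements merged into one kernel-verified Lean document; each statement's English description precedes it below -/
import Mathlib

section
/- If G is a graph on n vertices with ℓ connected components, then for every pair of nonnegative integers (r,s) with n − ℓ ≤ r + s ≤ n there exists a real symmetric matrix A ∈ S(G) with partial inertia (r,s). -/
open Matrix

/-- Number of positive eigenvalues (with multiplicity) of a real symmetric matrix. -/
noncomputable def posIn {m : ℕ} {A : Matrix (Fin m) (Fin m) ℝ} (hA : A.IsHermitian) : ℕ :=
  Finset.card (Finset.univ.filter fun i => 0 < hA.eigenvalues i)

/-- Number of negative eigenvalues (with multiplicity) of a real symmetric matrix. -/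
noncomputable def negIn {m : ℕ} {A : Matrix (Fin m) (Fin m) ℝ} (hA : A.IsHermitian) : ℕ :=
  Finset.card (Finset.univ.filter fun i => hA.eigenvalues i < 0)

/-- `A` has partial inertia `(r, s)`. -/
def HasInertia {m : ℕ} (A : Matrix (Fin m) (Fin m) ℝ) (r s : ℕ) : Prop :=
  ∃ hA : A.IsHermitian, posIn hA = r ∧ negIn hA = s

/-- `A` is a real symmetric matrix whose off-diagonal zero–nonzero pattern is
given by the edges of the graph `G`. -/
def SMat {m : ℕ} (G : SimpleGraph (Fin m)) (A : Matrix (Fin m) (Fin m) ℝ) : Prop :=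
  A.IsSymm ∧ ∀ i j : Fin m, i ≠ j → (A i j ≠ 0 ↔ G.Adj i j)

theorem eig_form {n : ℕ} {A : Matrix (Fin n) (Fin n) ℝ} (hA : A.IsHermitian) :
    ∃ Q : Matrix (Fin n) (Fin n) ℝ, (∀ x, Q *ᵥ x = 0 → x = 0) ∧
      ∀ x, x ⬝ᵥ (A *ᵥ x) = ∑ i, hA.eigenvalues i * ((Q *ᵥ x) i) ^ 2 := by
  refine ⟨(star (hA.eigenvectorUnitary : Matrix (Fin n) (Fin n) ℝ)), ?_, ?_⟩
  · intro x hx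
    have h := congrArg (fun y => (hA.eigenvectorUnitary : Matrix (Fin n) (Fin n) ℝ) *ᵥ y) hx
    simpa [Matrix.mulVec_mulVec] using h
  · intro x
    have h := hA.spectral_theorem
    rw [Unitary.conjStarAlgAut_apply] at h
    set U : Matrix (Fin n) (Fin n) ℝ := (hA.eigenvectorUnitary : Matrix (Fin n) (Fin n) ℝ) with hU
    have h2 : x ⬝ᵥ (A *ᵥ x) = (star U *ᵥ x) ⬝ᵥ
        (diagonal (RCLike.ofReal ∘ hA.eigenvalues) *ᵥ (star U *ᵥ x)) := by
      conv_lhs => rw [h]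
      rw [← Matrix.mulVec_mulVec, ← Matrix.mulVec_mulVec, Matrix.dotProduct_mulVec,
        Matrix.star_eq_conjTranspose, Matrix.conjTranspose_eq_transpose_of_trivial,
        Matrix.mulVec_transpose]
    rw [h2]
    simp only [dotProduct, mulVec_diagonal]
    refine Finset.sum_congr rfl fun i _ => ?_
    simp
    ring

theorem exists_common {n : ℕ} (P Q : Matrix (Fin n) (Fin n) ℝ) (Z S : Finset (Fin n))
    (h : Z.card + S.card < n) :
    ∃ x : Fin n → ℝ, x ≠ 0 ∧ (∀ v ∈ Z, (P *ᵥ x) v = 0) ∧ (∀ v ∈ S, (Q *ᵥ x) v = 0) := by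
  let F : (Fin n → ℝ) →ₗ[ℝ] ((Z → ℝ) × (S → ℝ)) :=
    ((LinearMap.funLeft ℝ ℝ (fun z : Z => (z : Fin n))) ∘ₗ P.mulVecLin).prod
      ((LinearMap.funLeft ℝ ℝ (fun z : S => (z : Fin n))) ∘ₗ Q.mulVecLin)
  have hF : LinearMap.ker F ≠ ⊥ := F.ker_ne_bot_of_finrank_lt (by simpa using h)
  obtain ⟨x, hx, hx0⟩ := Submodule.exists_mem_ne_zero_of_ne_bot hF
  have hx' : F x = 0 := hx
  refine ⟨x, hx0, fun v hv => ?_, fun v hv => ?_⟩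
  · exact congrFun (congrArg Prod.fst hx') ⟨v, hv⟩
  · exact congrFun (congrArg Prod.snd hx') ⟨v, hv⟩

/-- The inertia is read off from four sign conditions on a form. -/
theorem inertia_of_form {n : ℕ} {A : Matrix (Fin n) (Fin n) ℝ} (hA : A.IsHermitian)
    (P : Matrix (Fin n) (Fin n) ℝ) (X Y : Finset (Fin n))
    (h1 : ∀ x, x ≠ 0 → (∀ v ∈ Xᶜ, (P *ᵥ x) v = 0) → 0 < x ⬝ᵥ (A *ᵥ x))
    (h2 : ∀ x, x ≠ 0 → (∀ v ∈ Yᶜ, (P *ᵥ x) v = 0) → x ⬝ᵥ (A *ᵥ x) < 0)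
    (h3 : ∀ x, (∀ v ∈ X, (P *ᵥ x) v = 0) → x ⬝ᵥ (A *ᵥ x) ≤ 0)
    (h4 : ∀ x, (∀ v ∈ Y, (P *ᵥ x) v = 0) → 0 ≤ x ⬝ᵥ (A *ᵥ x)) :
    HasInertia A X.card Y.card := by
  obtain ⟨Q, hQ0, hQ⟩ := eig_form hA
  have key : ∀ Z S : Finset (Fin n), Z.card + S.card < n →
    ∃ x : Fin n → ℝ, x ≠ 0 ∧ (∀ v ∈ Z, (P *ᵥ x) v = 0) ∧ (∀ v ∈ S, (Q *ᵥ x) v = 0) :=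
    exists_common P Q
  have hne : ∀ x : Fin n → ℝ, x ≠ 0 → ∃ i, (Q *ᵥ x) i ≠ 0 := by
    intro x hx
    by_contra! hc
    exact hx (hQ0 x (funext hc))
  have hX := Finset.card_add_card_compl X
  have hY := Finset.card_add_card_compl Y
  simp only [Fintype.card_fin] at hX hY
  refine ⟨hA, le_antisymm ?_ ?_, le_antisymm ?_ ?_⟩
  · by_contra! hc
    have hS := Finset.card_add_card_compl (Finset.univ.filter fun i => 0 < hA.eigenvalues i)
    simp only [Fintype.card_fin] at hS
    unfold posIn at hc
    obtain ⟨x, hx, hz, hs⟩ := key X (Finset.univ.filter fun i => 0 < hA.eigenvalues i)ᶜ (by omega)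
    have h := h3 x hz
    rw [hQ] at h
    obtain ⟨i, hi⟩ := hne x hx
    have : 0 < ∑ i, hA.eigenvalues i * ((Q *ᵥ x) i) ^ 2 := by
      refine Finset.sum_pos' (fun j _ => ?_) ⟨i, Finset.mem_univ _, ?_⟩
      · by_cases hj : 0 < hA.eigenvalues j
        · positivity
        · simp [hs j (by simpa using hj)]
      · have : 0 < hA.eigenvalues i := by
          by_contra hj
          exact hi (hs i (by simpa using hj))
        positivity
    linarith
  · by_contra! hc
    unfold posIn at hc
    obtain ⟨x, hx, hz, hs⟩ := key Xᶜ (Finset.univ.filter fun i => 0 < hA.eigenvalues i) (by omega)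
    have h := h1 x hx hz
    rw [hQ] at h
    have : ∑ i, hA.eigenvalues i * ((Q *ᵥ x) i) ^ 2 ≤ 0 := by
      refine Finset.sum_nonpos fun j _ => ?_
      by_cases hj : 0 < hA.eigenvalues j
      · simp [hs j (by simpa using hj)]
      · exact mul_nonpos_of_nonpos_of_nonneg (not_lt.1 hj) (sq_nonneg _)
    linarith
  · by_contra! hc
    have hS := Finset.card_add_card_compl (Finset.univ.filter fun i => hA.eigenvalues i < 0)
    simp only [Fintype.card_fin] at hS
    unfold negIn at hc
    obtain ⟨x, hx, hz, hs⟩ := key Y (Finset.univ.filter fun i => hA.eigenvalues i < 0)ᶜ (by omega)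
    have h := h4 x hz
    rw [hQ] at h
    obtain ⟨i, hi⟩ := hne x hx
    have : 0 < ∑ i, - (hA.eigenvalues i * ((Q *ᵥ x) i) ^ 2) := by
      refine Finset.sum_pos' (fun j _ => ?_) ⟨i, Finset.mem_univ _, ?_⟩
      · by_cases hj : hA.eigenvalues j < 0
        · have := mul_nonpos_of_nonpos_of_nonneg hj.le (sq_nonneg ((Q *ᵥ x) j))
          linarith
        · simp [hs j (by simpa using hj)]
      · have : hA.eigenvalues i < 0 := by
          by_contra hj
          exact hi (hs i (by simpa using hj))
        have := mul_neg_of_neg_of_pos this (show 0 < ((Q *ᵥ x) i) ^ 2 by positivity)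
        linarith
    rw [Finset.sum_neg_distrib] at this
    linarith
  · by_contra! hc
    unfold negIn at hc
    obtain ⟨x, hx, hz, hs⟩ := key Yᶜ (Finset.univ.filter fun i => hA.eigenvalues i < 0) (by omega)
    have h := h2 x hx hz
    rw [hQ] at h
    have : 0 ≤ ∑ i, hA.eigenvalues i * ((Q *ᵥ x) i) ^ 2 := by
      refine Finset.sum_nonneg fun j _ => ?_
      by_cases hj : hA.eigenvalues j < 0
      · simp [hs j (by simpa using hj)]
      · exact mul_nonneg (not_lt.1 hj) (sq_nonneg _)
    linarith

/-- A rooted spanning forest. -/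
theorem exists_forest {n : ℕ} (G : SimpleGraph (Fin n)) :
    ∃ (rt p : Fin n → Fin n) (d : Fin n → ℕ), (∀ u v, G.Adj u v → rt u = rt v) ∧
      (∀ v, v ≠ rt v → G.Adj v (p v) ∧ d (p v) < d v) ∧
      (Finset.univ.filter fun v => v = rt v).card = Nat.card G.ConnectedComponent := by
  classical
  let rt : Fin n → Fin n := fun v => (G.connectedComponentMk v).out
  have hrt : ∀ c : G.ConnectedComponent, G.connectedComponentMk c.out = c := fun c => Quot.out_eq c
  have hadj : ∀ u v, G.Adj u v → rt u = rt v := fun u v h => by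
    have : G.connectedComponentMk u = G.connectedComponentMk v :=
      SimpleGraph.ConnectedComponent.sound h.reachable
    simp only [rt, this]
  have hex : ∀ v, ∃ q, v ≠ rt v → G.Adj v q ∧ G.dist q (rt q) < G.dist v (rt v) := by
    intro v
    by_cases hv : v = rt v
    · exact ⟨v, fun h => absurd hv h⟩
    have hr : G.Reachable v (rt v) := SimpleGraph.ConnectedComponent.exact (hrt _).symm
    obtain ⟨w, hw⟩ := hr.exists_walk_length_eq_dist
    generalize hz : rt v = z at w hw hv
    cases w with
    | nil => exact absurd rfl hv
    | @cons _ q _ h w' =>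
      refine ⟨q, fun _ => ⟨h, ?_⟩⟩
      rw [← hadj _ _ h, hz, ← hw]
      have := SimpleGraph.dist_le w'
      simp only [SimpleGraph.Walk.length_cons]
      omega
  choose p hp using hex
  refine ⟨rt, p, fun v => G.dist v (rt v), hadj, hp, ?_⟩
  rw [Nat.card_eq_fintype_card, ← Finset.card_univ]
  refine Finset.card_bij' (fun v _ => G.connectedComponentMk v) (fun c _ => c.out) ?_ ?_ ?_ ?_
  · simp
  · intro c _
    simp [rt, hrt]
  · intro v hv
    exact (Finset.mem_filter.1 hv).2.symm
  · intro c _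
    exact hrt c

/-- The change of basis attached to a rooted forest. -/
noncomputable def forestMat {n : ℕ} (rt p : Fin n → Fin n) : Matrix (Fin n) (Fin n) ℝ :=
  fun v i => (if v = i then 1 else 0) - (if v ≠ rt v ∧ p v = i then 1 else 0)

theorem forestMat_mulVec {n : ℕ} (rt p : Fin n → Fin n) (x : Fin n → ℝ) (v : Fin n) :
    (forestMat rt p *ᵥ x) v = if v = rt v then x v else x v - x (p v) := by
  simp only [Matrix.mulVec, dotProduct, forestMat, sub_mul, Finset.sum_sub_distrib]
  by_cases h : v = rt v
  · simp [← h]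
  · simp [h]

/-- If G has ℓ components, every partial inertia (r,s) with n−ℓ ≤ r+s ≤ n is
attained in S(G). -/
theorem stmt5 {n : ℕ} (G : SimpleGraph (Fin n)) (ℓ : ℕ)
    (hl : ℓ = Nat.card G.ConnectedComponent) (r s : ℕ)
    (h1 : n - ℓ ≤ r + s) (h2 : r + s ≤ n) :
    ∃ A : Matrix (Fin n) (Fin n) ℝ, SMat G A ∧ HasInertia A r s := by
  classical
  obtain ⟨rt, p, d, hrt, hp, hcard⟩ := exists_forest G
  have hR := Finset.card_add_card_compl (Finset.univ.filter fun v => v = rt v)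
  simp only [Fintype.card_fin] at hR
  obtain ⟨T, hT, -, hTc⟩ := Finset.exists_subsuperset_card_eq (n := r + s)
    (Finset.subset_univ (Finset.univ.filter fun v => v = rt v)ᶜ) (by omega) (by simpa using h2)
  obtain ⟨X, hXT, hXc⟩ := Finset.exists_subset_card_eq (s := T) (n := r) (by omega)
  set Y := T \ X with hYdef
  have hYc : Y.card = s := by
    rw [hYdef, Finset.card_sdiff_of_subset hXT]; omega
  have hXY : ∀ v, v ∈ X → v ∉ Y := fun v hv h => (Finset.mem_sdiff.1 h).2 hv
  have hroot : ∀ v, v ≠ rt v → v ∈ X ∨ v ∈ Y := by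
    intro v hv
    have : v ∈ T := hT (by simpa using hv)
    by_cases h : v ∈ X
    · exact Or.inl h
    · exact Or.inr (Finset.mem_sdiff.2 ⟨this, h⟩)
  set P := forestMat rt p with hPdef
  have hP0 : ∀ x, P *ᵥ x = 0 → x = 0 := by
    intro x hx
    have : ∀ k v, d v = k → x v = 0 := by
      intro k
      induction k using Nat.strong_induction_on with
      | _ k ih =>
        intro v hv
        have h := congrFun hx v
        rw [hPdef, forestMat_mulVec] at h
        by_cases hvr : v = rt v
        · rw [if_pos hvr] at h; simpa using h
        · rw [if_neg hvr, ih _ (hv ▸ (hp v hvr).2) (p v) rfl] at h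
          simpa using h
    exact funext fun v => this _ v rfl
  -- the energy of the nonroot coordinates
  let N : (Fin n → ℝ) → ℝ := fun x => ∑ v with v ≠ rt v, ((P *ᵥ x) v) ^ 2
  have hN0 : ∀ x, 0 ≤ N x := fun x => Finset.sum_nonneg fun _ _ => sq_nonneg _
  have hpath : ∀ x k v, d v = k → |x v - x (rt v)| ≤ d v * √(N x) := by
    intro x k
    induction k using Nat.strong_induction_on with
    | _ k ih =>
      intro v hv
      by_cases hvr : v = rt v
      · rw [← hvr]; simp; positivity
      · have hlt := (hp v hvr).2
        have e1 := ih _ (hv ▸ hlt) (p v) rfl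
        rw [← hrt _ _ (hp v hvr).1] at e1
        have e2 : |x v - x (p v)| ≤ √(N x) := by
          apply Real.abs_le_sqrt
          have := Finset.single_le_sum (f := fun v => ((P *ᵥ x) v) ^ 2)
            (fun _ _ => sq_nonneg _) (show v ∈ Finset.univ.filter (fun v => v ≠ rt v) by simpa using hvr)
          rw [hPdef, forestMat_mulVec, if_neg hvr] at this
          exact this
        have e3 : ((d (p v) : ℝ) + 1) ≤ d v := by exact_mod_cast hlt
        have e4 := mul_le_mul_of_nonneg_right e3 (Real.sqrt_nonneg (N x))
        calc |x v - x (rt v)| = |(x v - x (p v)) + (x (p v) - x (rt v))| := by ring_nf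
          _ ≤ |x v - x (p v)| + |x (p v) - x (rt v)| := abs_add_le _ _
          _ ≤ d v * √(N x) := by linarith
  let L := G.lapMatrix ℝ
  let C : ℝ := ∑ i, ∑ j, ((d i : ℝ) + d j) ^ 2
  have hC0 : 0 ≤ C := Finset.sum_nonneg fun _ _ => Finset.sum_nonneg fun _ _ => sq_nonneg _
  have hLform : ∀ x, x ⬝ᵥ (L *ᵥ x) =
      (∑ i, ∑ j, if G.Adj i j then (x i - x j) ^ 2 else 0) / 2 := by
    intro x
    rw [← G.lapMatrix_toLinearMap₂' ℝ x, Matrix.toLinearMap₂'_apply']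
  have hL0 : ∀ x, 0 ≤ x ⬝ᵥ (L *ᵥ x) := by
    intro x
    rw [hLform]
    refine div_nonneg (Finset.sum_nonneg fun i _ => Finset.sum_nonneg fun j _ => ?_) (by norm_num)
    split_ifs <;> positivity
  have hLC : ∀ x, x ⬝ᵥ (L *ᵥ x) ≤ C * N x := by
    intro x
    have : (∑ i, ∑ j, if G.Adj i j then (x i - x j) ^ 2 else 0) ≤ C * N x := by
      simp only [C, Finset.sum_mul]
      refine Finset.sum_le_sum fun i _ => Finset.sum_le_sum fun j _ => ?_
      split_ifs with hij
      · have a1 := hpath x _ i rfl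
        have a2 := hpath x _ j rfl
        rw [← hrt _ _ hij, abs_sub_comm] at a2
        have a3 : |x i - x j| ≤ (d i + d j) * √(N x) := by
          calc |x i - x j| = |(x i - x (rt i)) + (x (rt i) - x j)| := by ring_nf
            _ ≤ _ := abs_add_le _ _
            _ ≤ _ := by linarith
        have a4 := pow_le_pow_left₀ (abs_nonneg _) a3 2
        rw [sq_abs, mul_pow, Real.sq_sqrt (hN0 x)] at a4
        exact a4
      · exact mul_nonneg (sq_nonneg _) (hN0 x)
    have h0 := hL0 x
    rw [hLform] at h0 ⊢
    linarith
  let K : ℝ := C + 2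
  let w : Fin n → ℝ := fun v => if v ∈ X then 1 else if v ∈ Y then -1 else 0
  let A : Matrix (Fin n) (Fin n) ℝ := Pᵀ * diagonal (fun v => K * w v) * P + L
  have hsymm : A.IsSymm := by
    refine Matrix.IsSymm.add ?_ (G.isSymm_lapMatrix ℝ)
    simp [Matrix.IsSymm, Matrix.transpose_mul, Matrix.mul_assoc]
  have hform : ∀ x, x ⬝ᵥ (A *ᵥ x) = K * ∑ v, w v * ((P *ᵥ x) v) ^ 2 + x ⬝ᵥ (L *ᵥ x) := by
    intro x
    simp only [A, Matrix.add_mulVec, dotProduct_add]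
    congr 1
    rw [← Matrix.mulVec_mulVec, ← Matrix.mulVec_mulVec, Matrix.dotProduct_mulVec,
      Matrix.vecMul_transpose, Finset.mul_sum]
    simp only [dotProduct, mulVec_diagonal]
    exact Finset.sum_congr rfl fun i _ => by ring
  have hentry : ∀ i j, i ≠ j → A i j = -(K * w i * (if i ≠ rt i ∧ p i = j then 1 else 0))
      - (K * w j * (if j ≠ rt j ∧ p j = i then 1 else 0)) - (if G.Adj i j then 1 else 0) := by
    intro i j hij
    have e1 : (Pᵀ * diagonal (fun v => K * w v) * P) i j =
        ∑ v, ((if v = i then -(K * w v * (if v ≠ rt v ∧ p v = j then 1 else 0)) else 0)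
          + (if v = j then -(K * w v * (if v ≠ rt v ∧ p v = i then 1 else 0)) else 0)) := by
      rw [Matrix.mul_apply]
      refine Finset.sum_congr rfl fun v _ => ?_
      rw [Matrix.mul_diagonal, Matrix.transpose_apply]
      simp only [hPdef, forestMat]
      have f1 : ((if v = i then 1 else 0) * (if v = j then 1 else 0) : ℝ) = 0 := by
        by_cases a : v = i
        · have : v ≠ j := fun b => hij (a.symm.trans b)
          rw [if_neg this, mul_zero]
        · rw [if_neg a, zero_mul]
      have f2 : ((if v ≠ rt v ∧ p v = i then 1 else 0) *
          (if v ≠ rt v ∧ p v = j then 1 else 0) : ℝ) = 0 := by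
        by_cases a : p v = i
        · have : ¬ (v ≠ rt v ∧ p v = j) := fun b => hij (a.symm.trans b.2)
          rw [if_neg this, mul_zero]
        · rw [if_neg (fun b => a b.2), zero_mul]
      have f3 : ∀ (q : Prop) [Decidable q] (z : ℝ),
          (if q then z else 0) = (if q then 1 else 0) * z := by
        intro q _ z
        split_ifs <;> simp
      rw [f3 (v = i) (-_), f3 (v = j) (-_)]
      linear_combination K * w v * f1 + K * w v * f2
    have e2 : L i j = - (if G.Adj i j then 1 else 0) := by
      simp [L, SimpleGraph.lapMatrix, SimpleGraph.degMatrix, hij, SimpleGraph.adjMatrix_apply]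
    change (Pᵀ * diagonal (fun v => K * w v) * P) i j + L i j = _
    rw [e1, e2, Finset.sum_add_distrib]
    simp only [Finset.sum_ite_eq', Finset.mem_univ, if_true]
    ring
  have hw : ∀ v, v ≠ rt v → w v = 1 ∨ w v = -1 := by
    intro v hv
    rcases hroot v hv with h | h
    · left; simp [w, h]
    · right; simp [w, h, show v ∉ X from fun hh => hXY v hh h]
  refine ⟨A, ⟨hsymm, fun i j hij => ?_⟩, ?_⟩
  · rw [hentry i j hij]
    by_cases a : i ≠ rt i ∧ p i = j
    · have adj : G.Adj i j := a.2 ▸ (hp i a.1).1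
      have nb : ¬ (j ≠ rt j ∧ p j = i) := by
        intro b
        have l1 := (hp i a.1).2
        have l2 := (hp j b.1).2
        rw [a.2] at l1
        rw [b.2] at l2
        omega
      rw [if_pos a, if_neg nb, if_pos adj]
      refine ⟨fun _ => adj, fun _ h => ?_⟩
      simp only [K] at h
      rcases hw i a.1 with e | e <;> rw [e] at h <;> linarith
    · rw [if_neg a]
      by_cases b : j ≠ rt j ∧ p j = i
      · have adj : G.Adj i j := (b.2 ▸ (hp j b.1).1 : G.Adj j i).symm
        rw [if_pos b, if_pos adj]
        refine ⟨fun _ => adj, fun _ h => ?_⟩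
        simp only [K] at h
        rcases hw j b.1 with e | e <;> rw [e] at h <;> linarith
      · rw [if_neg b]
        by_cases adj : G.Adj i j <;> simp [adj]
  · rw [← hXc, ← hYc]
    have hA : A.IsHermitian := by
      rw [Matrix.IsHermitian, Matrix.conjTranspose_eq_transpose_of_trivial]; exact hsymm
    have hNle : ∀ x, N x ≤ ∑ v, ((P *ᵥ x) v) ^ 2 := fun x =>
      Finset.sum_le_sum_of_subset_of_nonneg (Finset.filter_subset _ _) fun _ _ _ => sq_nonneg _
    have hpos : ∀ x, x ≠ 0 → 0 < ∑ v, ((P *ᵥ x) v) ^ 2 := by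
      intro x hx
      obtain ⟨i, hi⟩ : ∃ i, (P *ᵥ x) i ≠ 0 := by
        by_contra! hc
        exact hx (hP0 x (funext hc))
      exact Finset.sum_pos' (fun _ _ => sq_nonneg _) ⟨i, Finset.mem_univ _, by positivity⟩
    have hK : 0 < K := by simp only [K]; linarith
    refine inertia_of_form hA P X Y ?_ ?_ ?_ ?_
    · intro x hx hz
      have e : ∑ v, w v * ((P *ᵥ x) v) ^ 2 = ∑ v, ((P *ᵥ x) v) ^ 2 := by
        refine Finset.sum_congr rfl fun v _ => ?_
        by_cases hv : v ∈ X
        · simp [w, hv]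
        · simp [hz v (by simpa using hv)]
      rw [hform, e]
      have := mul_pos hK (hpos x hx)
      linarith [hL0 x]
    · intro x hx hz
      have e : ∑ v, w v * ((P *ᵥ x) v) ^ 2 = - ∑ v, ((P *ᵥ x) v) ^ 2 := by
        rw [← Finset.sum_neg_distrib]
        refine Finset.sum_congr rfl fun v _ => ?_
        by_cases hv : v ∈ Y
        · simp [w, hv, show v ∉ X from fun hh => hXY v hh hv]
        · simp [hz v (by simpa using hv)]
      rw [hform, e]
      have a1 := hpos x hx
      have a2 := mul_le_mul_of_nonneg_left (hNle x) hC0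
      have a3 := hLC x
      simp only [K]
      linarith
    · intro x hz
      have e : ∑ v, w v * ((P *ᵥ x) v) ^ 2 ≤ - N x := by
        simp only [N]
        rw [← Finset.sum_neg_distrib, Finset.sum_filter]
        refine Finset.sum_le_sum fun v _ => ?_
        by_cases hv : v ∈ X
        · simp [hz v hv]
        · by_cases hv' : v ∈ Y
          · simp only [w, hv, hv', if_true, if_false]
            split_ifs
            · linarith
            · linarith [sq_nonneg ((P *ᵥ x) v)]
          · have : ¬ (v ≠ rt v) := fun h => (hroot v h).elim hv hv'
            simp [w, hv, hv', this]
      rw [hform]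
      have a1 := mul_le_mul_of_nonneg_left e hK.le
      have a3 := hLC x
      have a4 := hN0 x
      simp only [K] at a1 ⊢
      linarith
    · intro x hz
      have e : 0 ≤ ∑ v, w v * ((P *ᵥ x) v) ^ 2 := by
        refine Finset.sum_nonneg fun v _ => ?_
        by_cases hv : v ∈ Y
        · simp [hz v hv]
        · by_cases hv' : v ∈ X
          · simp only [w, hv', if_true]; positivity
          · simp [w, hv, hv']
      rw [hform]
      have := mul_nonneg hK.le e
      linarith [hL0 x]
end

section
/- (Stars and Stripes Lemma) Let G be a graph with n vertices, let k be an integer with 0 ≤ k ≤ n such that M_k(G) ≥ k, and let r, s be integers with r ≥ k, s ≥ k, and r + s = n − M_k(G) + k. Then there exists a real symmetric matrix A ∈ S(G) with partial inertia (r,s). -/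
open Matrix

/-- The maximal disconnection of `G` by `k` vertices: the maximum number of
connected components of an induced subgraph of `G` on `n - k` vertices. -/
noncomputable def MD {n : ℕ} (G : SimpleGraph (Fin n)) (k : ℕ) : ℕ :=
  Finset.sup (Finset.univ.filter fun s : Finset (Fin n) => s.card = n - k)
    fun s => Nat.card (SimpleGraph.induce (↑s : Set (Fin n)) G).ConnectedComponent

/-- Quadratic form of a matrix. -/
noncomputable def qf {n : ℕ} (A : Matrix (Fin n) (Fin n) ℝ) (x : Fin n → ℝ) : ℝ :=
  x ⬝ᵥ (A *ᵥ x)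

lemma exists_coords {n : ℕ} {A : Matrix (Fin n) (Fin n) ℝ} (hA : A.IsHermitian) :
    ∃ c : (Fin n → ℝ) →ₗ[ℝ] (Fin n → ℝ), Function.Injective c ∧
      ∀ x, qf A x = ∑ i, hA.eigenvalues i * (c x i) ^ 2 := by
  set P : Matrix (Fin n) (Fin n) ℝ := (hA.eigenvectorUnitary : Matrix (Fin n) (Fin n) ℝ) with hP
  have hPP : P * star P = 1 := Unitary.mul_star_self_of_mem hA.eigenvectorUnitary.2
  have hs := hA.spectral_theorem
  rw [Unitary.conjStarAlgAut_apply] at hs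
  refine ⟨(star P).mulVecLin, ?_, ?_⟩
  · intro x y h
    have h' : P *ᵥ (star P *ᵥ x) = P *ᵥ (star P *ᵥ y) := congrArg (fun z => P *ᵥ z) h
    simpa [Matrix.mulVec_mulVec, hPP] using h'
  · intro x
    have e : A *ᵥ x = P *ᵥ (diagonal hA.eigenvalues *ᵥ (star P *ᵥ x)) := by
      conv_lhs => rw [hs]
      rw [Matrix.mulVec_mulVec, Matrix.mulVec_mulVec]
      rfl
    have e2 : x ᵥ* P = star P *ᵥ x := by
      rw [Matrix.star_eq_conjTranspose, Matrix.conjTranspose_eq_transpose_of_trivial,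
        Matrix.mulVec_transpose]
    rw [qf, e, Matrix.dotProduct_mulVec, e2]
    simp only [dotProduct, Matrix.mulVec_diagonal, Matrix.mulVecLin_apply]
    exact Finset.sum_congr rfl fun i _ => by ring

lemma diag_le {n : ℕ} (c : (Fin n → ℝ) →ₗ[ℝ] (Fin n → ℝ)) (hc : Function.Injective c)
    (l : Fin n → ℝ) (U : Submodule ℝ (Fin n → ℝ))
    (hU : ∀ x ∈ U, ∑ i, l i * (c x i) ^ 2 ≤ 0) :
    (Finset.univ.filter fun i => 0 < l i).card + Module.finrank ℝ U ≤ n := by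
  classical
  let g : U →ₗ[ℝ] ({i // ¬ 0 < l i} → ℝ) :=
    (LinearMap.funLeft ℝ ℝ (fun i : {i // ¬ 0 < l i} => (i : Fin n))) ∘ₗ c ∘ₗ U.subtype
  have hg : Function.Injective g := by
    rw [← LinearMap.ker_eq_bot, LinearMap.ker_eq_bot']
    intro x hx
    have h0 : ∀ i, ¬ 0 < l i → c x i = 0 := fun i hi => congrFun hx ⟨i, hi⟩
    have hnn : ∀ i ∈ Finset.univ, 0 ≤ l i * (c x i) ^ 2 := by
      intro i _
      by_cases hi : 0 < l i
      · positivity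
      · simp [h0 i hi]
    have hz := (Finset.sum_eq_zero_iff_of_nonneg hnn).1
      (le_antisymm (hU x x.2) (Finset.sum_nonneg hnn))
    have hcx : c x = 0 := by
      funext i
      by_cases hi : 0 < l i
      · have := hz i (Finset.mem_univ i)
        simpa [hi.ne'] using this
      · exact h0 i hi
    have : (x : Fin n → ℝ) = 0 := hc (by rw [hcx, map_zero])
    exact Subtype.ext this
  have h1 := LinearMap.finrank_le_finrank_of_injective hg
  rw [Module.finrank_fintype_fun_eq_card, Fintype.card_subtype] at h1
  have h2 := Finset.card_filter_add_card_filter_not (s := (Finset.univ : Finset (Fin n)))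
    (fun i => 0 < l i)
  simp only [Finset.card_univ, Fintype.card_fin] at h2
  omega

lemma finrank_ker_ge {n : ℕ} {ι : Type*} [Fintype ι] (g : (Fin n → ℝ) →ₗ[ℝ] (ι → ℝ)) :
    n ≤ Module.finrank ℝ (LinearMap.ker g) + Fintype.card ι := by
  have h1 := LinearMap.finrank_range_add_finrank_ker g
  have h2 := Submodule.finrank_le (LinearMap.range g)
  simp only [Module.finrank_fintype_fun_eq_card, Fintype.card_fin] at h1 h2
  omega

lemma diag_exists {n : ℕ} (c : (Fin n → ℝ) →ₗ[ℝ] (Fin n → ℝ)) (l : Fin n → ℝ) :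
    ∃ U : Submodule ℝ (Fin n → ℝ), (∀ x ∈ U, ∑ i, l i * (c x i) ^ 2 ≤ 0) ∧
    n ≤ Module.finrank ℝ U + (Finset.univ.filter fun i => 0 < l i).card := by
  classical
  let g : (Fin n → ℝ) →ₗ[ℝ] ({i // 0 < l i} → ℝ) :=
    (LinearMap.funLeft ℝ ℝ (fun i : {i // 0 < l i} => (i : Fin n))) ∘ₗ c
  refine ⟨LinearMap.ker g, ?_, ?_⟩
  · intro x hx
    refine Finset.sum_nonpos fun i _ => ?_
    by_cases hi : 0 < l i
    · have : c x i = 0 := congrFun (LinearMap.mem_ker.1 hx) ⟨i, hi⟩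
      simp [this]
    · exact mul_nonpos_of_nonpos_of_nonneg (not_lt.1 hi) (sq_nonneg _)
  · have := finrank_ker_ge g
    rwa [Fintype.card_subtype] at this

lemma finrank_inf_ge {n : ℕ} (U V : Submodule ℝ (Fin n → ℝ)) :
    Module.finrank ℝ U + Module.finrank ℝ V ≤ Module.finrank ℝ (U ⊓ V : Submodule ℝ _) + n := by
  have h1 := Submodule.finrank_sup_add_finrank_inf_eq U V
  have h2 := Submodule.finrank_le (U ⊔ V)
  simp only [Module.finrank_fintype_fun_eq_card, Fintype.card_fin] at h2
  omega

lemma posIn_le {n : ℕ} {A B : Matrix (Fin n) (Fin n) ℝ} (hA : A.IsHermitian) (hB : B.IsHermitian)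
    (V : Submodule ℝ (Fin n → ℝ)) (h : ∀ x ∈ V, qf B x ≤ qf A x) :
    posIn hB + Module.finrank ℝ V ≤ posIn hA + n := by
  obtain ⟨c, hc, hcA⟩ := exists_coords hA
  obtain ⟨d, hd, hdB⟩ := exists_coords hB
  obtain ⟨U, hU, hU2⟩ := diag_exists c hA.eigenvalues
  have h1 := diag_le d hd hB.eigenvalues (U ⊓ V) (by
    intro x hx
    rw [← hdB]
    exact (h x hx.2).trans (by rw [hcA]; exact hU x hx.1))
  have h2 := finrank_inf_ge U V
  unfold posIn
  omega

lemma negIn_le {n : ℕ} {A B : Matrix (Fin n) (Fin n) ℝ} (hA : A.IsHermitian) (hB : B.IsHermitian)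
    (V : Submodule ℝ (Fin n → ℝ)) (h : ∀ x ∈ V, qf A x ≤ qf B x) :
    negIn hB + Module.finrank ℝ V ≤ negIn hA + n := by
  obtain ⟨c, hc, hcA⟩ := exists_coords hA
  obtain ⟨d, hd, hdB⟩ := exists_coords hB
  obtain ⟨U, hU, hU2⟩ := diag_exists c (fun i => - hA.eigenvalues i)
  have h1 := diag_le d hd (fun i => - hB.eigenvalues i) (U ⊓ V) (by
    intro x hx
    have e1 := hU x hx.1
    have e2 := h x hx.2
    rw [hcA, hdB] at e2
    simp only [neg_mul, Finset.sum_neg_distrib] at e1 ⊢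
    linarith)
  have h2 := finrank_inf_ge U V
  simp only [Left.neg_pos_iff] at h1 hU2
  unfold negIn
  omega

lemma posIn_zero_of {n : ℕ} {A : Matrix (Fin n) (Fin n) ℝ} (hA : A.IsHermitian)
    (h : ∀ x, qf A x ≤ 0) : posIn hA = 0 := by
  obtain ⟨c, hc, hcA⟩ := exists_coords hA
  have h1 := diag_le c hc hA.eigenvalues ⊤ (by intro x _; rw [← hcA]; exact h x)
  rw [finrank_top, Module.finrank_fintype_fun_eq_card, Fintype.card_fin] at h1
  unfold posIn
  omega

lemma negIn_zero_of {n : ℕ} {A : Matrix (Fin n) (Fin n) ℝ} (hA : A.IsHermitian)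
    (h : ∀ x, 0 ≤ qf A x) : negIn hA = 0 := by
  obtain ⟨c, hc, hcA⟩ := exists_coords hA
  have h1 := diag_le c hc (fun i => - hA.eigenvalues i) ⊤ (by
    intro x _
    have := h x
    rw [hcA] at this
    simp only [neg_mul, Finset.sum_neg_distrib]
    linarith)
  rw [finrank_top, Module.finrank_fintype_fun_eq_card, Fintype.card_fin] at h1
  simp only [Left.neg_pos_iff] at h1
  unfold negIn
  omega

lemma inertia_sum {n : ℕ} {A : Matrix (Fin n) (Fin n) ℝ} (hA : A.IsHermitian) :
    posIn hA + negIn hA + Module.finrank ℝ (LinearMap.ker A.mulVecLin) = n := by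
  classical
  have h1 := LinearMap.finrank_range_add_finrank_ker A.mulVecLin
  have h2 : A.rank = Module.finrank ℝ (LinearMap.range A.mulVecLin) := rfl
  rw [hA.rank_eq_card_non_zero_eigs, Fintype.card_subtype] at h2
  have h3 : (Finset.univ.filter fun i => hA.eigenvalues i ≠ 0).card = posIn hA + negIn hA := by
    unfold posIn negIn
    rw [← Finset.card_union_of_disjoint]
    · congr 1
      ext i
      simp only [Finset.mem_filter, Finset.mem_univ, true_and, Finset.mem_union]
      rw [ne_iff_lt_or_gt, or_comm]
    · rw [Finset.disjoint_filter]
      intro i _ h h'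
      linarith
  simp only [Module.finrank_fintype_fun_eq_card, Fintype.card_fin] at h1
  omega

lemma qf_add {n : ℕ} (A B : Matrix (Fin n) (Fin n) ℝ) (x : Fin n → ℝ) :
    qf (A + B) x = qf A x + qf B x := by
  simp [qf, Matrix.add_mulVec, dotProduct_add]

lemma single_mulVec' {n : ℕ} (i : Fin n) (t : ℝ) (x : Fin n → ℝ) :
    diagonal (Pi.single i t) *ᵥ x = Pi.single i (t * x i) := by
  funext j
  rw [Matrix.mulVec_diagonal]
  by_cases h : j = i
  · subst h; simp
  · simp [h]

lemma qf_single {n : ℕ} (i : Fin n) (t : ℝ) (x : Fin n → ℝ) :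
    qf (diagonal (Pi.single i t)) x = t * x i ^ 2 := by
  rw [qf, single_mulVec', dotProduct_single]
  ring

/-- Northeast step. -/
lemma northeast {n : ℕ} {A : Matrix (Fin n) (Fin n) ℝ} (hA : A.IsHermitian)
    (h : posIn hA + negIn hA < n) :
    ∃ i : Fin n, ∀ t : ℝ, t ≠ 0 → ∃ hB : (A + diagonal (Pi.single i t)).IsHermitian,
      (0 < t → posIn hB = posIn hA + 1 ∧ negIn hB = negIn hA) ∧
      (t < 0 → posIn hB = posIn hA ∧ negIn hB = negIn hA + 1) := by
  have hs := inertia_sum hA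
  have hk : LinearMap.ker A.mulVecLin ≠ ⊥ := by
    intro h0
    rw [h0, finrank_bot] at hs
    omega
  obtain ⟨x, hx, hx0⟩ := Submodule.exists_mem_ne_zero_of_ne_bot hk
  obtain ⟨i, hi⟩ := Function.ne_iff.1 hx0
  have hi : x i ≠ 0 := hi
  have hAx : A *ᵥ x = 0 := hx
  have hAt : Aᵀ = A := by
    rw [← Matrix.conjTranspose_eq_transpose_of_trivial]; exact hA
  refine ⟨i, fun t ht => ?_⟩
  have hB : (A + diagonal (Pi.single i t)).IsHermitian :=
    hA.add (Matrix.isHermitian_diagonal _)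
  refine ⟨hB, ?_⟩
  set B := A + diagonal (Pi.single i t) with hBdef
  have hBv : ∀ y, B *ᵥ y = A *ᵥ y + Pi.single i (t * y i) := by
    intro y
    rw [hBdef, Matrix.add_mulVec, single_mulVec']
  have hlt : LinearMap.ker B.mulVecLin < LinearMap.ker A.mulVecLin := by
    rw [SetLike.lt_iff_le_and_exists]
    refine ⟨?_, x, hx, ?_⟩
    · intro y hy
      have hy' : B *ᵥ y = 0 := hy
      rw [hBv] at hy'
      have h1 : x ⬝ᵥ (A *ᵥ y) = 0 := by
        rw [Matrix.dotProduct_mulVec, ← Matrix.mulVec_transpose, hAt, hAx, zero_dotProduct]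
      have h2 := congrArg (fun z => x ⬝ᵥ z) hy'
      simp only [dotProduct_add, h1, dotProduct_single, dotProduct_zero, zero_add] at h2
      have h3 : t * y i = 0 := by
        rcases mul_eq_zero.1 h2 with h | h
        · exact absurd h hi
        · exact h
      rw [h3, Pi.single_zero, add_zero] at hy'
      exact hy'
    · intro hy
      have hy' : B *ᵥ x = 0 := hy
      rw [hBv, hAx, zero_add] at hy'
      have := congrFun hy' i
      simp [ht, hi] at this
  have hlt' := Submodule.finrank_lt_finrank_of_lt hlt
  have hs' := inertia_sum hB
  have hq : ∀ y, qf B y = qf A y + t * y i ^ 2 := by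
    intro y; rw [hBdef, qf_add, qf_single]
  let g : (Fin n → ℝ) →ₗ[ℝ] (Unit → ℝ) := LinearMap.funLeft ℝ ℝ (fun _ => i)
  have hg := finrank_ker_ge g
  have hg0 : ∀ y ∈ LinearMap.ker g, y i = 0 := fun y hy => congrFun (LinearMap.mem_ker.1 hy) ()
  have htop : Module.finrank ℝ (⊤ : Submodule ℝ (Fin n → ℝ)) = n := by
    rw [finrank_top, Module.finrank_fintype_fun_eq_card, Fintype.card_fin]
  simp only [Fintype.card_unit] at hg
  have p1 := posIn_le hA hB (LinearMap.ker g) (by intro y hy; rw [hq, hg0 y hy]; simp)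
  have n1 := negIn_le hA hB (LinearMap.ker g) (by intro y hy; rw [hq, hg0 y hy]; simp)
  constructor
  · intro htp
    have n2 := negIn_le hA hB ⊤ (by intro y _; rw [hq]; nlinarith [sq_nonneg (y i)])
    omega
  · intro htp
    have p2 := posIn_le hA hB ⊤ (by intro y _; rw [hq]; nlinarith [sq_nonneg (y i)])
    omega

lemma SMat.isHermitian {n : ℕ} {G : SimpleGraph (Fin n)} {A : Matrix (Fin n) (Fin n) ℝ}
    (h : SMat G A) : A.IsHermitian := by
  rw [Matrix.IsHermitian, Matrix.conjTranspose_eq_transpose_of_trivial]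
  exact h.1

lemma SMat.add_diag {n : ℕ} {G : SimpleGraph (Fin n)} {A : Matrix (Fin n) (Fin n) ℝ}
    (h : SMat G A) (d : Fin n → ℝ) : SMat G (A + diagonal d) := by
  refine ⟨h.1.add (Matrix.isSymm_diagonal d), fun i j hij => ?_⟩
  rw [Matrix.add_apply, Matrix.diagonal_apply_ne _ hij, add_zero]
  exact h.2 i j hij

lemma climb {n : ℕ} (G : SimpleGraph (Fin n)) (r s : ℕ) (hrs : r + s ≤ n) (m : ℕ) :
    ∀ (A : Matrix (Fin n) (Fin n) ℝ) (_ : SMat G A) (hA : A.IsHermitian),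
      posIn hA ≤ r → negIn hA ≤ s → posIn hA + negIn hA + m = r + s →
      ∃ A : Matrix (Fin n) (Fin n) ℝ, SMat G A ∧ HasInertia A r s := by
  induction m with
  | zero =>
    intro A hS hA h1 h2 h3
    exact ⟨A, hS, hA, by omega, by omega⟩
  | succ m ih =>
    intro A hS hA h1 h2 h3
    obtain ⟨i, hi⟩ := northeast hA (by omega)
    by_cases hp : posIn hA < r
    · obtain ⟨hB, hB1, _⟩ := hi 1 one_ne_zero
      have := hB1 one_pos
      exact ih _ (hS.add_diag _) hB (by omega) (by omega) (by omega)
    · obtain ⟨hB, _, hB1⟩ := hi (-1) (by norm_num)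
      have := hB1 (by norm_num)
      exact ih _ (hS.add_diag _) hB (by omega) (by omega) (by omega)

/-- Weighted Laplacian. -/
noncomputable def wLap {n : ℕ} (W : Fin n → Fin n → ℝ) : Matrix (Fin n) (Fin n) ℝ :=
  diagonal (fun i => ∑ j, W i j) - Matrix.of W

lemma wLap_mulVec {n : ℕ} (W : Fin n → Fin n → ℝ) (x : Fin n → ℝ) (i : Fin n) :
    (wLap W *ᵥ x) i = ∑ j, W i j * (x i - x j) := by
  rw [wLap, Matrix.sub_mulVec, Pi.sub_apply, Matrix.mulVec_diagonal]
  simp only [Matrix.mulVec, dotProduct, Matrix.of_apply, mul_sub, Finset.sum_sub_distrib,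
    Finset.sum_mul]

lemma wLap_qf {n : ℕ} (W : Fin n → Fin n → ℝ) (hW : ∀ i j, W i j = W j i) (x : Fin n → ℝ) :
    qf (wLap W) x = (∑ i, ∑ j, W i j * (x i - x j) ^ 2) / 2 := by
  have h1 : qf (wLap W) x = ∑ i, ∑ j, x i * (W i j * (x i - x j)) := by
    simp only [qf, dotProduct, wLap_mulVec, Finset.mul_sum]
  have h2 : qf (wLap W) x = ∑ i, ∑ j, x j * (W i j * (x j - x i)) := by
    rw [h1, Finset.sum_comm]
    exact Finset.sum_congr rfl fun i _ => Finset.sum_congr rfl fun j _ => by rw [hW]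
  have h3 : qf (wLap W) x + qf (wLap W) x = ∑ i, ∑ j, W i j * (x i - x j) ^ 2 := by
    nth_rewrite 1 [h1]
    rw [h2, ← Finset.sum_add_distrib]
    refine Finset.sum_congr rfl fun i _ => ?_
    rw [← Finset.sum_add_distrib]
    exact Finset.sum_congr rfl fun j _ => by ring
  linarith

lemma wLap_symm {n : ℕ} (W : Fin n → Fin n → ℝ) (hW : ∀ i j, W i j = W j i) :
    (wLap W).IsHermitian := by
  rw [Matrix.IsHermitian, Matrix.conjTranspose_eq_transpose_of_trivial, wLap,
    Matrix.transpose_sub, Matrix.diagonal_transpose]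
  congr 1
  ext i j
  exact hW j i

open Classical in
/-- Signed weights of a graph: edges in `T` get `-1`. -/
noncomputable def sgnW {n : ℕ} (F : SimpleGraph (Fin n)) (T : Finset (Sym2 (Fin n)))
    (i j : Fin n) : ℝ :=
  if F.Adj i j then (if s(i, j) ∈ T then -1 else 1) else 0

lemma sgnW_symm {n : ℕ} (F : SimpleGraph (Fin n)) (T : Finset (Sym2 (Fin n))) (i j : Fin n) :
    sgnW F T i j = sgnW F T j i := by
  unfold sgnW
  rw [F.adj_comm, Sym2.eq_swap]

/-- Signed Laplacians realise any split of the rank bound. -/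
lemma stripes {n : ℕ} (F : SimpleGraph (Fin n)) (p q : ℕ)
    (hsum : ∀ T, posIn (wLap_symm _ (sgnW_symm F T)) + negIn (wLap_symm _ (sgnW_symm F T)) ≤ p + q) :
    ∃ T, posIn (wLap_symm _ (sgnW_symm F T)) ≤ p ∧ negIn (wLap_symm _ (sgnW_symm F T)) ≤ q := by
  classical
  by_cases h0 : posIn (wLap_symm _ (sgnW_symm F ∅)) ≤ p
  · refine ⟨∅, h0, ?_⟩
    rw [negIn_zero_of]
    · exact Nat.zero_le _
    · intro x
      rw [wLap_qf _ (sgnW_symm F ∅)]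
      refine div_nonneg (Finset.sum_nonneg fun i _ => Finset.sum_nonneg fun j _ => ?_) (by norm_num)
      refine mul_nonneg ?_ (sq_nonneg _)
      unfold sgnW
      split_ifs <;> simp_all
  by_contra hcon
  have hne : ∀ T, posIn (wLap_symm _ (sgnW_symm F T)) ≠ p := by
    intro T hT
    exact hcon ⟨T, hT.le, by have := hsum T; omega⟩
  have key : ∀ T, p < posIn (wLap_symm _ (sgnW_symm F T)) := by
    intro T
    induction T using Finset.induction_on with
    | empty => omega
    | insert e T he ih =>
      induction e using Sym2.ind with
      | _ u v =>
        let g : (Fin n → ℝ) →ₗ[ℝ] (Unit → ℝ) :=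
          LinearMap.funLeft ℝ ℝ (fun _ => u) - LinearMap.funLeft ℝ ℝ (fun _ => v)
        have hg := finrank_ker_ge g
        simp only [Fintype.card_unit] at hg
        have hg0 : ∀ y ∈ LinearMap.ker g, y u = y v := by
          intro y hy
          have : y u - y v = 0 := congrFun (LinearMap.mem_ker.1 hy) ()
          linarith
        have := posIn_le (wLap_symm _ (sgnW_symm F (insert s(u, v) T)))
          (wLap_symm _ (sgnW_symm F T)) (LinearMap.ker g) (by
            intro x hx
            have hxuv := hg0 x hx
            rw [wLap_qf _ (sgnW_symm F _), wLap_qf _ (sgnW_symm F _)]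
            apply le_of_eq
            congr 1
            refine Finset.sum_congr rfl fun i _ => Finset.sum_congr rfl fun j _ => ?_
            by_cases hij : s(i, j) = s(u, v)
            · have : x i = x j := by
                rcases Sym2.eq_iff.1 hij with ⟨rfl, rfl⟩ | ⟨rfl, rfl⟩
                · exact hxuv
                · exact hxuv.symm
              simp [this]
            · simp [sgnW, Finset.mem_insert, hij])
        have := hne (insert s(u, v) T)
        omega
  have := key Finset.univ
  rw [posIn_zero_of] at this
  · omega
  · intro x
    rw [wLap_qf _ (sgnW_symm F _)]
    refine div_nonpos_of_nonpos_of_nonneg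
      (Finset.sum_nonpos fun i _ => Finset.sum_nonpos fun j _ => ?_) (by norm_num)
    refine mul_nonpos_of_nonpos_of_nonneg ?_ (sq_nonneg _)
    unfold sgnW
    split_ifs <;> simp_all

/-- Edges of `G` inside `S`. -/
def inner {n : ℕ} (G : SimpleGraph (Fin n)) (S : Finset (Fin n)) : SimpleGraph (Fin n) where
  Adj i j := G.Adj i j ∧ i ∈ S ∧ j ∈ S
  symm := ⟨fun _ _ h => ⟨h.1.symm, h.2.2, h.2.1⟩⟩
  loopless := ⟨fun _ h => G.irrefl h.1⟩

lemma ker_ge {n : ℕ} (G : SimpleGraph (Fin n)) (S : Finset (Fin n)) (T : Finset (Sym2 (Fin n))) :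
    Nat.card (SimpleGraph.induce (↑S : Set (Fin n)) G).ConnectedComponent + (n - S.card) ≤
      Module.finrank ℝ (LinearMap.ker (wLap (sgnW (inner G S) T)).mulVecLin) := by
  classical
  let F := SimpleGraph.induce (↑S : Set (Fin n)) G
  haveI : Fintype F.ConnectedComponent := Fintype.ofFinite _
  let f : Fin n → F.ConnectedComponent ⊕ {v : Fin n // v ∉ S} := fun v =>
    if h : v ∈ S then Sum.inl (F.connectedComponentMk ⟨v, h⟩) else Sum.inr ⟨v, h⟩
  have hf : Function.Surjective f := by
    rintro (c | ⟨v, hv⟩)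
    · induction c using SimpleGraph.ConnectedComponent.ind with
      | _ v =>
        refine ⟨v.1, ?_⟩
        have hv : v.1 ∈ S := v.2
        simp [f, hv]
    · exact ⟨v, by simp [f, hv]⟩
  have hadj : ∀ i j, (inner G S).Adj i j → f i = f j := by
    rintro i j ⟨h, hi, hj⟩
    simp only [f, hi, hj, dif_pos]
    congr 1
    apply SimpleGraph.ConnectedComponent.sound
    apply SimpleGraph.Adj.reachable
    exact h
  let g : ((F.ConnectedComponent ⊕ {v : Fin n // v ∉ S}) → ℝ) →ₗ[ℝ] (Fin n → ℝ) :=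
    LinearMap.funLeft ℝ ℝ f
  have hg : Function.Injective g := LinearMap.funLeft_injective_of_surjective ℝ ℝ f hf
  have hle : LinearMap.range g ≤ LinearMap.ker (wLap (sgnW (inner G S) T)).mulVecLin := by
    rintro _ ⟨y, rfl⟩
    rw [LinearMap.mem_ker, Matrix.mulVecLin_apply]
    funext i
    rw [wLap_mulVec]
    refine Finset.sum_eq_zero fun j _ => ?_
    by_cases h : (inner G S).Adj i j
    · simp [g, LinearMap.funLeft_apply, hadj i j h]
    · simp [sgnW, h]
  have h1 := Submodule.finrank_mono hle
  rw [LinearMap.finrank_range_of_inj hg, Module.finrank_fintype_fun_eq_card, Fintype.card_sum,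
    Fintype.card_subtype_compl, Fintype.card_fin, Fintype.card_coe] at h1
  rwa [Nat.card_eq_fintype_card]

/-- Stars and Stripes Lemma. -/
theorem stmt6 {n : ℕ} (G : SimpleGraph (Fin n)) (k r s : ℕ) (hk : k ≤ n)
    (hMk : k ≤ MD G k) (hr : k ≤ r) (hs : k ≤ s)
    (hrs : r + s = n - MD G k + k) :
    ∃ A : Matrix (Fin n) (Fin n) ℝ, SMat G A ∧ HasInertia A r s := by
  classical
  have hne : (Finset.univ.filter fun s : Finset (Fin n) => s.card = n - k).Nonempty := by
    obtain ⟨t, _, ht⟩ := Finset.exists_subset_card_eq (s := (Finset.univ : Finset (Fin n)))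
      (n := n - k) (by simp)
    exact ⟨t, by simp [ht]⟩
  obtain ⟨S, hS, hSM⟩ := Finset.exists_mem_eq_sup _ hne
    (fun s => Nat.card (SimpleGraph.induce (↑s : Set (Fin n)) G).ConnectedComponent)
  have hSM : MD G k = Nat.card (SimpleGraph.induce (↑S : Set (Fin n)) G).ConnectedComponent := hSM
  have hSc : S.card = n - k := by simpa using hS
  obtain ⟨T, hT1, hT2⟩ := stripes (inner G S) (r - k) (s - k) (by
    intro T
    have h1 := ker_ge G S T
    have h2 := inertia_sum (wLap_symm _ (sgnW_symm (inner G S) T))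
    rw [← hSM] at h1
    omega)
  have hMle : MD G k ≤ n := by
    have h1 := ker_ge G S T
    have h2 := inertia_sum (wLap_symm _ (sgnW_symm (inner G S) T))
    rw [← hSM] at h1
    omega
  set D := wLap (sgnW (inner G S) T) with hD
  have hDh : D.IsHermitian := wLap_symm _ (sgnW_symm (inner G S) T)
  let B : Matrix (Fin n) (Fin n) ℝ :=
    Matrix.of fun i j => if G.Adj i j ∧ ¬ (inner G S).Adj i j then 1 else 0
  have hBh : B.IsHermitian := by
    rw [Matrix.IsHermitian, Matrix.conjTranspose_eq_transpose_of_trivial]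
    ext i j
    simp only [B, Matrix.transpose_apply, Matrix.of_apply, G.adj_comm, (inner G S).adj_comm]
  have hA : (D + B).IsHermitian := hDh.add hBh
  have hSA : SMat G (D + B) := by
    refine ⟨?_, ?_⟩
    · have := hA
      rw [Matrix.IsHermitian, Matrix.conjTranspose_eq_transpose_of_trivial] at this
      exact this
    · intro i j hij
      have e : (D + B) i j = - sgnW (inner G S) T i j +
          (if G.Adj i j ∧ ¬ (inner G S).Adj i j then 1 else 0) := by
        simp [D, B, wLap, Matrix.diagonal_apply_ne _ hij]
      rw [e]
      by_cases h1 : G.Adj i j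
      · by_cases h2 : (inner G S).Adj i j
        · simp only [sgnW, h1, h2]
          split_ifs <;> simp_all
        · simp [sgnW, h1, h2]
      · have h2 : ¬ (inner G S).Adj i j := fun h => h1 h.1
        simp [sgnW, h1, h2]
  let g : (Fin n → ℝ) →ₗ[ℝ] ({v : Fin n // v ∉ S} → ℝ) :=
    LinearMap.funLeft ℝ ℝ (fun v => (v : Fin n))
  have hg := finrank_ker_ge g
  rw [Fintype.card_subtype_compl, Fintype.card_fin, Fintype.card_coe] at hg
  have hq : ∀ x ∈ LinearMap.ker g, qf (D + B) x = qf D x := by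
    intro x hx
    have hx0 : ∀ v, v ∉ S → x v = 0 := fun v hv => congrFun (LinearMap.mem_ker.1 hx) ⟨v, hv⟩
    rw [qf_add]
    have : qf B x = 0 := by
      simp only [qf, dotProduct, Matrix.mulVec, Finset.mul_sum]
      refine Finset.sum_eq_zero fun i _ => Finset.sum_eq_zero fun j _ => ?_
      by_cases hi : i ∈ S
      · by_cases hj : j ∈ S
        · have : ¬ (G.Adj i j ∧ ¬ (inner G S).Adj i j) := fun h => h.2 ⟨h.1, hi, hj⟩
          simp only [B, Matrix.of_apply, if_neg this]
          ring
        · simp [hx0 j hj]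
      · simp [hx0 i hi]
    rw [this, add_zero]
  have p1 := posIn_le hDh hA (LinearMap.ker g) fun x hx => (hq x hx).le
  have n1 := negIn_le hDh hA (LinearMap.ker g) fun x hx => (hq x hx).ge
  have hp : posIn hA ≤ r := by omega
  have hn : negIn hA ≤ s := by omega
  exact climb G r s (by omega) (r + s - (posIn hA + negIn hA)) (D + B) hSA hA hp hn (by omega)
end

section
/- For any tree T on n vertices, mr(T) + P(T) = n, where mr(T) is the minimum rank of a matrix in S(T) and P(T) is the path cover number of T. -/
open Matrix

/-- `s` induces a path in `G` (possibly a one-vertex or empty path). -/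
def IsPathSet {V : Type*} [Fintype V] [DecidableEq V] (G : SimpleGraph V) (s : Finset V) : Prop :=
  ∃ m : ℕ, Nonempty ((SimpleGraph.induce (↑s : Set V) G) ≃g SimpleGraph.pathGraph m)

/-- The path cover number: the minimum number of vertex-disjoint induced paths
covering all vertices of `G`. -/
noncomputable def pathCoverNumber {V : Type*} [Fintype V] [DecidableEq V]
    (G : SimpleGraph V) : ℕ :=
  sInf {p | ∃ P : Finset (Finset V), P.card = p ∧ (∀ s ∈ P, IsPathSet G s) ∧
    ∀ v : V, ∃! s, s ∈ P ∧ v ∈ s}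

/-- Minimum rank over S(G). -/
noncomputable def mr {n : ℕ} (G : SimpleGraph (Fin n)) : ℕ :=
  sInf {r | ∃ A : Matrix (Fin n) (Fin n) ℝ, SMat G A ∧ A.rank = r}


section PCaux

set_option linter.unusedSectionVars false

variable {V : Type*} [Fintype V] [DecidableEq V]

/-- Kernel of the principal submatrix of `A` on `S`, as vectors supported in `S`. -/
def KK (A : Matrix V V ℝ) (S : Finset V) : Submodule ℝ (V → ℝ) where
  carrier := {x | (∀ i, i ∉ S → x i = 0) ∧ ∀ i ∈ S, ∑ j, A i j * x j = 0}
  add_mem' := by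
    rintro x y ⟨h1, h2⟩ ⟨h3, h4⟩
    refine ⟨fun i hi => by simp [h1 i hi, h3 i hi], fun i hi => ?_⟩
    simp [mul_add, Finset.sum_add_distrib, h2 i hi, h4 i hi]
  zero_mem' := by simp
  smul_mem' := by
    rintro c x ⟨h1, h2⟩
    refine ⟨fun i hi => by simp [h1 i hi], fun i hi => ?_⟩
    have := h2 i hi
    simp only [Pi.smul_apply, smul_eq_mul, mul_left_comm _ c, ← Finset.mul_sum, this, mul_zero]

theorem mem_KK {A : Matrix V V ℝ} {S : Finset V} {x : V → ℝ} :
    x ∈ KK A S ↔ (∀ i, i ∉ S → x i = 0) ∧ ∀ i ∈ S, ∑ j, A i j * x j = 0 := Iff.rfl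

theorem KK_congr {A B : Matrix V V ℝ} {S : Finset V} (h : ∀ i ∈ S, ∀ j ∈ S, A i j = B i j) :
    KK A S = KK B S := by
  ext x
  simp only [mem_KK]
  refine and_congr_right fun h0 => forall₂_congr fun i hi => ?_
  have : ∑ j, A i j * x j = ∑ j, B i j * x j := by
    refine Finset.sum_congr rfl fun j _ => ?_
    by_cases hj : j ∈ S
    · rw [h i hi j hj]
    · rw [h0 j hj]; simp
  rw [this]

theorem fr_le {K L : Submodule ℝ (V → ℝ)} (f : (V → ℝ) →ₗ[ℝ] (V → ℝ))
    (h : ∀ x ∈ K, f x ∈ L) (h0 : ∀ x ∈ K, f x = 0 → x = 0) :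
    Module.finrank ℝ K ≤ Module.finrank ℝ L := by
  apply LinearMap.finrank_le_finrank_of_injective (f := f.restrict h)
  rw [← LinearMap.ker_eq_bot, LinearMap.ker_eq_bot']
  rintro ⟨x, hx⟩ hx0
  have := congrArg Subtype.val hx0
  simp only [LinearMap.restrict_apply] at this
  exact Subtype.ext (h0 x hx this)

/-- `x ↦ x + φ(x) e_v`. -/
def shear (v : V) (φ : (V → ℝ) →ₗ[ℝ] ℝ) : (V → ℝ) →ₗ[ℝ] (V → ℝ) :=
  LinearMap.id + (LinearMap.single ℝ (fun _ : V => ℝ) v).comp φ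

theorem shear_apply (v : V) (φ : (V → ℝ) →ₗ[ℝ] ℝ) (x : V → ℝ) (i : V) :
    shear v φ x i = x i + if i = v then φ x else 0 := by
  by_cases h : i = v
  · subst h; simp [shear]
  · simp [shear, h]

theorem shear_sum (v : V) (φ : (V → ℝ) →ₗ[ℝ] ℝ) (x : V → ℝ) (a : V → ℝ) :
    ∑ j, a j * shear v φ x j = ∑ j, a j * x j + a v * φ x := by
  simp [shear_apply, mul_add, Finset.sum_add_distrib]

/-- Add `c` at diagonal entry `u`. -/
def addD (A : Matrix V V ℝ) (u : V) (c : ℝ) : Matrix V V ℝ :=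
  fun i j => A i j + if i = u ∧ j = u then c else 0

theorem addD_sum (A : Matrix V V ℝ) (u : V) (c : ℝ) (x : V → ℝ) (i : V) :
    ∑ j, addD A u c i j * x j = ∑ j, A i j * x j + if i = u then c * x u else 0 := by
  by_cases h : i = u
  · simp [addD, h, add_mul, Finset.sum_add_distrib]
  · simp [addD, h]

theorem row_two {a x : V → ℝ} {S : Finset V} {u v : V} (huv : v ≠ u)
    (hx : ∀ i, i ∉ S → x i = 0) (ha : ∀ i ∈ S, i ≠ u → i ≠ v → a i = 0) :
    ∑ j, a j * x j = a v * x v + a u * x u := by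
  rw [← Finset.sum_pair (f := fun j => a j * x j) huv]
  symm
  refine Finset.sum_subset (Finset.subset_univ _) fun i _ hi => ?_
  simp only [Finset.mem_insert, Finset.mem_singleton, not_or] at hi
  by_cases h : i ∈ S
  · rw [ha i h hi.2 hi.1]; simp
  · rw [hx i h]; simp

theorem elim1 {A : Matrix V V ℝ} {S : Finset V} {u v : V} (huv : v ≠ u) (hv : v ∈ S) (hu : u ∈ S)
    (hr : ∀ i ∈ S, i ≠ u → i ≠ v → A v i = 0) (hc : ∀ i ∈ S, i ≠ u → i ≠ v → A i v = 0)
    (ha : A v v ≠ 0) :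
    Module.finrank ℝ (KK A S) =
      Module.finrank ℝ (KK (addD A u (-(A u v * A v u / A v v))) (S.erase v)) := by
  apply le_antisymm
  · refine fr_le (shear v (-LinearMap.proj v)) ?_ ?_
    · rintro x ⟨h1, h2⟩
      have hrow := h2 v hv
      rw [row_two huv h1 hr] at hrow
      have hxv : x v = - (A v u * x u) / A v v := by field_simp; linarith
      refine ⟨fun i hi => ?_, fun i hi => ?_⟩
      · rw [shear_apply]
        by_cases h : i = v
        · subst h; simp
        · simp only [Finset.mem_erase, not_and] at hi
          simp [h, h1 i (hi h)]
      · obtain ⟨hiv, hiS⟩ := Finset.mem_erase.1 hi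
        rw [addD_sum, shear_sum, h2 i hiS, shear_apply]
        by_cases h : i = u
        · subst h
          simp [huv.symm, hxv]; field_simp; ring
        · simp [h, hc i hiS h hiv]
    · rintro x ⟨h1, h2⟩ h0
      have hrow := h2 v hv
      rw [row_two huv h1 hr] at hrow
      have h3 : ∀ i, i ≠ v → x i = 0 := fun i hi => by
        have := congrFun h0 i
        simpa [shear_apply, hi] using this
      rw [h3 u huv.symm] at hrow
      simp [ha] at hrow
      funext i
      by_cases hi : i = v
      · subst hi; exact hrow
      · exact h3 i hi
  · refine fr_le (shear v ((-(A v u / A v v)) • LinearMap.proj u)) ?_ ?_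
    · rintro x ⟨h1, h2⟩
      have hxv : x v = 0 := h1 v (by simp)
      have h1' : ∀ i, i ∉ S → x i = 0 := fun i hi => h1 i (fun h => hi (Finset.mem_of_mem_erase h))
      refine ⟨fun i hi => ?_, fun i hi => ?_⟩
      · rw [shear_apply, h1' i hi, if_neg (by rintro rfl; exact hi hv)]; simp
      · rw [shear_sum]
        by_cases hiv : i = v
        · subst hiv
          rw [row_two huv h1' hr, hxv]
          simp; field_simp; ring
        · have := h2 i (Finset.mem_erase.2 ⟨hiv, hi⟩)
          rw [addD_sum] at this
          by_cases h : i = u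
          · subst h
            simp at this ⊢
            rw [← this]; ring
          · simp [h] at this
            simp [this, hc i hi h hiv]
    · rintro x ⟨h1, h2⟩ h0
      funext i
      by_cases hi : i = v
      · subst hi; exact h1 i (by simp)
      · have := congrFun h0 i
        simpa [shear_apply, hi] using this

theorem elim2 {A : Matrix V V ℝ} {S : Finset V} {u v : V} (huv : v ≠ u) (hv : v ∈ S) (hu : u ∈ S)
    (hr : ∀ i ∈ S, i ≠ u → i ≠ v → A v i = 0) (hc : ∀ i ∈ S, i ≠ u → i ≠ v → A i v = 0)
    (ha : A v v = 0) (h1 : A v u ≠ 0) (h2 : A u v ≠ 0) :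
    Module.finrank ℝ (KK A S) = Module.finrank ℝ (KK A ((S.erase v).erase u)) := by
  apply le_antisymm
  · refine fr_le (shear v (-LinearMap.proj v)) ?_ ?_
    · rintro x ⟨h3, h4⟩
      have hrow := h4 v hv
      rw [row_two huv h3 hr, ha] at hrow
      have hxu : x u = 0 := by simpa [h1] using hrow
      refine ⟨fun i hi => ?_, fun i hi => ?_⟩
      · rw [shear_apply]
        by_cases h : i = v
        · subst h; simp
        · by_cases h' : i = u
          · subst h'; simp [h, hxu]
          · simp only [Finset.mem_erase, not_and] at hi
            simp [h, h3 i (hi h' h)]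
      · simp only [Finset.mem_erase] at hi
        obtain ⟨hiu, hiv, hiS⟩ := hi
        rw [shear_sum, h4 i hiS, hc i hiS hiu hiv]; simp
    · rintro x ⟨h3, h4⟩ h0
      have h5 : ∀ i, i ≠ v → x i = 0 := fun i hi => by
        have := congrFun h0 i
        simpa [shear_apply, hi] using this
      have hrow := h4 u hu
      rw [Finset.sum_eq_single v (fun b _ hb => by rw [h5 b hb]; simp) (by simp)] at hrow
      simp [h2] at hrow
      funext i
      by_cases hi : i = v
      · subst hi; exact hrow
      · exact h5 i hi
  · refine fr_le (shear v ((-(A u v)⁻¹) • ∑ j, A u j • LinearMap.proj j)) ?_ ?_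
    · rintro x ⟨h3, h4⟩
      have hxv : x v = 0 := h3 v (by simp)
      have hxu : x u = 0 := h3 u (by simp)
      have h3' : ∀ i, i ∉ S → x i = 0 := fun i hi => h3 i (by simp [hi])
      refine ⟨fun i hi => ?_, fun i hi => ?_⟩
      · rw [shear_apply, h3' i hi, if_neg (by rintro rfl; exact hi hv)]; simp
      · rw [shear_sum]
        by_cases hiv : i = v
        · subst hiv
          rw [row_two huv h3' hr, hxv, hxu, ha]; simp
        · by_cases h : i = u
          · subst h
            simp [h2]
          · rw [h4 i (by simp [h, hiv, hi]), hc i hi h hiv]; simp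
    · rintro x ⟨h3, h4⟩ h0
      funext i
      by_cases hi : i = v
      · subst hi; exact h3 i (by simp)
      · have := congrFun h0 i
        simpa [shear_apply, hi] using this

theorem isol_le {A : Matrix V V ℝ} {S : Finset V} {v : V} (hc : ∀ i ∈ S, i ≠ v → A i v = 0) :
    Module.finrank ℝ (KK A S) ≤ Module.finrank ℝ (KK A (S.erase v)) + 1 := by
  have key : ∀ x ∈ KK A S, shear v (-LinearMap.proj v) x ∈ KK A (S.erase v) := by
    rintro x ⟨h1, h2⟩
    refine ⟨fun i hi => ?_, fun i hi => ?_⟩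
    · rw [shear_apply]
      by_cases h : i = v
      · subst h; simp
      · simp only [Finset.mem_erase, not_and] at hi
        simp [h, h1 i (hi h)]
    · obtain ⟨hiv, hiS⟩ := Finset.mem_erase.1 hi
      rw [shear_sum, h2 i hiS, hc i hiS hiv]; simp
  have : Module.finrank ℝ (KK A (S.erase v)) + 1 =
      Module.finrank ℝ ((KK A (S.erase v)) × ℝ) := by simp
  rw [this]
  apply LinearMap.finrank_le_finrank_of_injective
    (f := ((shear v (-LinearMap.proj v)).restrict key).prod
      ((LinearMap.proj v).comp (KK A S).subtype))
  rw [← LinearMap.ker_eq_bot, LinearMap.ker_eq_bot']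
  rintro ⟨x, hx⟩ hx0
  simp only [LinearMap.prod_apply, Prod.ext_iff] at hx0
  have h1 : shear v (-LinearMap.proj v) x = 0 := congrArg Subtype.val hx0.1
  have h2 : x v = 0 := by simpa using hx0.2
  refine Subtype.ext (funext fun i => ?_)
  have := congrFun h1 i
  by_cases hi : i = v
  · subst hi; exact h2
  · simpa [shear_apply, hi] using this

theorem isol_ge {A : Matrix V V ℝ} {S : Finset V} {v : V} (hv : v ∈ S)
    (hc : ∀ i ∈ S, A i v = 0) (hr : ∀ i ∈ S, A v i = 0) :
    Module.finrank ℝ (KK A (S.erase v)) + 1 ≤ Module.finrank ℝ (KK A S) := by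
  have key : ∀ x ∈ KK A (S.erase v), ∀ t : ℝ, x + Pi.single v t ∈ KK A S := by
    rintro x ⟨h1, h2⟩ t
    have h1' : ∀ i, i ∉ S → x i = 0 := fun i hi => h1 i (by simp [hi])
    refine ⟨fun i hi => ?_, fun i hi => ?_⟩
    · have : i ≠ v := by rintro rfl; exact hi hv
      simp [h1' i hi, this]
    · simp only [Pi.add_apply, mul_add, Finset.sum_add_distrib]
      have e2 : ∑ j, A i j * (Pi.single v t : V → ℝ) j = A i v * t := by
        simp [Pi.single_apply]
      rw [e2, hc i hi]
      by_cases hiv : i = v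
      · subst hiv
        rw [Finset.sum_eq_zero]
        · simp
        · intro j _
          by_cases hj : j ∈ S
          · rw [hr j hj]; simp
          · rw [h1' j hj]; simp
      · rw [h2 i (Finset.mem_erase.2 ⟨hiv, hi⟩)]; simp
  have : Module.finrank ℝ (KK A (S.erase v)) + 1 =
      Module.finrank ℝ ((KK A (S.erase v)) × ℝ) := by simp
  rw [this]
  let g : ((KK A (S.erase v)) × ℝ) →ₗ[ℝ] (V → ℝ) :=
    (KK A (S.erase v)).subtype.coprod (LinearMap.single ℝ (fun _ : V => ℝ) v)
  have hg : ∀ p, g p = (p.1 : V → ℝ) + Pi.single v p.2 := fun p => by simp [g]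
  apply LinearMap.finrank_le_finrank_of_injective
    (f := g.codRestrict (KK A S) (fun p => by rw [hg]; exact key _ p.1.2 _))
  rw [← LinearMap.ker_eq_bot, LinearMap.ker_eq_bot']
  rintro ⟨⟨x, hx⟩, t⟩ hx0
  have h1 := congrArg Subtype.val hx0
  simp only [LinearMap.codRestrict_apply, hg] at h1
  have hxv : x v = 0 := hx.1 v (by simp)
  have ht : t = 0 := by
    have := congrFun h1 v
    simpa [hxv] using this
  subst ht
  have hx0 : x = 0 := by simpa using h1
  subst hx0
  rfl

theorem KK_rank {n : ℕ} (A : Matrix (Fin n) (Fin n) ℝ) :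
    A.rank + Module.finrank ℝ (KK A Finset.univ) = n := by
  have : KK A Finset.univ = LinearMap.ker A.mulVecLin := by
    ext x
    simp only [mem_KK, LinearMap.mem_ker, Matrix.mulVecLin_apply]
    simp [funext_iff, Matrix.mulVec, dotProduct]
  rw [this, Matrix.rank, LinearMap.finrank_range_add_finrank_ker]
  simp

end PCaux

section PCleaf

set_option linter.unusedSectionVars false

variable {V : Type*} [Fintype V] [DecidableEq V]

theorem acyc_snd {G : SimpleGraph V} (hG : G.IsAcyclic) {v w x : V} (p : G.Walk v w)
    (hp : p.IsPath) (hx : x ∈ p.support) (ha : G.Adj v x) : x = p.snd := by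
  have h1 : (p.takeUntil x hx).IsPath := hp.takeUntil hx
  have h2 : (SimpleGraph.Walk.cons ha .nil).IsPath := by simp [ha.ne]
  have h3 := congrArg Subtype.val ((hG.subsingleton_path _ _).elim ⟨_, h1⟩ ⟨_, h2⟩)
  simp only at h3
  have h4 := p.take_spec hx
  rw [h3] at h4
  rw [← h4]
  simp

theorem good_leaf {G : SimpleGraph V} (hG : G.IsAcyclic) {S : Finset V} (hS : S.Nonempty) :
    ∃ v ∈ S, (∀ x ∈ S, ¬ G.Adj v x) ∨ ∃ u ∈ S, G.Adj v u ∧ (∀ x ∈ S, G.Adj v x → x = u) ∧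
      ((∃ w, ∀ x ∈ S, G.Adj u x → x = v ∨ x = w) ∨
        ∃ x ∈ S, x ≠ v ∧ G.Adj u x ∧ ∀ y ∈ S, G.Adj x y → y = u) := by
  let Q : ℕ → Prop := fun k => ∃ (v w : V) (p : G.Walk v w), p.IsPath ∧
    (∀ x ∈ p.support, x ∈ S) ∧ p.length = k
  have hQ0 : ∃ k, k ≤ Fintype.card V ∧ Q k := by
    obtain ⟨v, hv⟩ := hS
    exact ⟨0, Nat.zero_le _, v, v, .nil, by simp, by simpa using hv, rfl⟩
  classical
  obtain ⟨k0, hk0, hk0Q⟩ := hQ0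
  have hQk : Q (Nat.findGreatest Q (Fintype.card V)) := Nat.findGreatest_spec hk0 hk0Q
  set k := Nat.findGreatest Q (Fintype.card V) with hk
  have hmax : ∀ (v w : V) (p : G.Walk v w), p.IsPath → (∀ x ∈ p.support, x ∈ S) → p.length ≤ k := by
    intro v w p hp hs
    exact Nat.le_findGreatest hp.length_lt.le ⟨v, w, p, hp, hs, rfl⟩
  have hleaf : ∀ (v w : V) (p : G.Walk v w), p.IsPath → (∀ x ∈ p.support, x ∈ S) → p.length = k →
      ∀ x ∈ S, G.Adj v x → x = p.snd := by
    intro v w p hp hs hl x hx ha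
    by_cases hxp : x ∈ p.support
    · exact acyc_snd hG p hp hxp ha
    · have := hmax x w (.cons ha.symm p) (by simp [hp, hxp]) (by
        intro y hy
        simp at hy
        rcases hy with rfl | hy
        · exact hx
        · exact hs y hy)
      simp at this
      omega
  obtain ⟨v, w, p, hp, hs, hl⟩ := hQk
  refine ⟨v, hs v (by simp), ?_⟩
  cases p with
  | nil =>
    left
    intro x hx ha
    have := hleaf _ _ _ hp hs hl x hx ha
    simp at this
    exact ha.ne this.symm
  | @cons _ u _ h q =>
    right
    have hq : q.IsPath := hp.of_cons
    refine ⟨u, hs u (by simp), h, fun x hx ha => by simpa using hleaf _ _ _ hp hs hl x hx ha, ?_⟩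
    by_cases hx : ∃ x ∈ S, x ≠ v ∧ G.Adj u x ∧ x ≠ q.snd
    · right
      obtain ⟨x, hxS, hxv, hux, hxq⟩ := hx
      have hxn : x ∉ q.support := fun hm => hxq (acyc_snd hG q hq hm hux)
      refine ⟨x, hxS, hxv, hux, fun y hy ha => ?_⟩
      have := hleaf x w (.cons hux.symm q) (by simp [hq, hxn]) (by
        intro z hz
        simp at hz
        rcases hz with rfl | hz
        · exact hxS
        · exact hs z (by simp [hz])) (by simpa using hl) y hy ha
      simpa using this
    · left
      push Not at hx
      refine ⟨q.snd, fun x hxS hux => ?_⟩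
      by_cases h : x = v
      · exact Or.inl h
      · exact Or.inr (hx x hxS h hux)

end PCleaf

section PCmain

set_option linter.unusedSectionVars false

variable {V : Type*} [Fintype V] [DecidableEq V]

/-- Explicit enumeration of an induced path. -/
def PS (G : SimpleGraph V) (s : Finset V) : Prop :=
  ∃ (m : ℕ) (f : ℕ → V), (∀ i < m, ∀ j < m, f i = f j → i = j) ∧
    (∀ i < m, ∀ j < m, G.Adj (f i) (f j) ↔ i + 1 = j ∨ j + 1 = i) ∧
    ∀ x, x ∈ s ↔ ∃ i < m, f i = x

theorem PS.isPathSet {G : SimpleGraph V} {s : Finset V} (h : PS G s) : IsPathSet G s := by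
  obtain ⟨m, f, hi, ha, hs⟩ := h
  let g : Fin m → (↑s : Set V) := fun i => ⟨f i, (hs _).2 ⟨i, i.2, rfl⟩⟩
  have hg : Function.Bijective g := by
    constructor
    · intro i j hij
      exact Fin.ext (hi i i.2 j j.2 (congrArg Subtype.val hij))
    · rintro ⟨x, hx⟩
      obtain ⟨i, hi, rfl⟩ := (hs x).1 hx
      exact ⟨⟨i, hi⟩, rfl⟩
  refine ⟨m, ⟨SimpleGraph.Iso.symm ⟨Equiv.ofBijective g hg, ?_⟩⟩⟩
  intro i j
  rw [SimpleGraph.pathGraph_adj]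
  exact ha i i.2 j j.2

theorem IsPathSet.ps {G : SimpleGraph V} {s : Finset V} (h : IsPathSet G s) (hn : s.Nonempty) :
    PS G s := by
  obtain ⟨m, ⟨e⟩⟩ := h
  obtain ⟨x0, hx0⟩ := hn
  refine ⟨m, fun i => if h : i < m then (e.symm ⟨i, h⟩).1 else x0, ?_, ?_, ?_⟩
  · intro i hi j hj hij
    simp only [hi, hj, dif_pos] at hij
    have := e.symm.injective (Subtype.ext hij)
    simpa using this
  · intro i hi j hj
    simp only [hi, hj, dif_pos]
    have := e.symm.map_rel_iff (a := ⟨i, hi⟩) (b := ⟨j, hj⟩)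
    rw [SimpleGraph.pathGraph_adj] at this
    exact this
  · intro x
    constructor
    · intro hx
      refine ⟨e ⟨x, hx⟩, (e ⟨x, hx⟩).2, ?_⟩
      simp
    · rintro ⟨i, hi, rfl⟩
      simp only [hi, dif_pos]
      exact (e.symm ⟨i, hi⟩).2

theorem PS.edges {G : SimpleGraph V} {s : Finset V} (h : PS G s) :
    ∃ E : Finset (Sym2 V), s.card ≤ E.card + 1 ∧ (∀ e ∈ E, e ∈ G.edgeSet ∧ ∀ x ∈ e, x ∈ s) ∧
      ∀ x, (E.filter (x ∈ ·)).card ≤ 2 := by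
  obtain ⟨m, f, hi, ha, hs⟩ := h
  refine ⟨(Finset.range (m - 1)).image (fun i => s(f i, f (i + 1))), ?_, ?_, ?_⟩
  · rw [Finset.card_image_of_injOn, Finset.card_range]
    · have : s = (Finset.range m).image f := by
        ext x; simp [hs]
      rw [this]
      refine Finset.card_image_le.trans ?_
      simp; omega
    · intro i hi' j hj' hij
      simp only [Finset.coe_range, Set.mem_Iio] at hi' hj'
      simp only [Sym2.eq_iff] at hij
      rcases hij with ⟨h1, _⟩ | ⟨h1, h2⟩
      · exact hi _ (by omega) _ (by omega) h1
      · have := hi _ (by omega) _ (by omega) h1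
        have := hi _ (by omega) _ (by omega) h2
        omega
  · intro e he
    simp only [Finset.mem_image, Finset.mem_range] at he
    obtain ⟨i, hi', rfl⟩ := he
    refine ⟨?_, ?_⟩
    · rw [SimpleGraph.mem_edgeSet, ha _ (by omega) _ (by omega)]; simp
    · intro x hx
      rw [Sym2.mem_iff] at hx
      rw [hs]
      rcases hx with rfl | rfl
      · exact ⟨i, by omega, rfl⟩
      · exact ⟨i + 1, by omega, rfl⟩
  · intro x
    by_cases hx : ∃ i < m, f i = x
    · obtain ⟨k, hk, rfl⟩ := hx
      refine le_trans (Finset.card_le_card (t := {s(f (k - 1), f k), s(f k, f (k + 1))}) ?_)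
        Finset.card_le_two
      intro e he
      simp only [Finset.mem_filter, Finset.mem_image, Finset.mem_range] at he
      obtain ⟨⟨i, hi', rfl⟩, hm⟩ := he
      rw [Sym2.mem_iff] at hm
      simp only [Finset.mem_insert, Finset.mem_singleton]
      rcases hm with hm | hm
      · have := hi _ (by omega) _ (by omega) hm
        subst this; simp
      · have := hi _ (by omega) _ (by omega) hm
        subst this; simp
    · rw [Finset.filter_eq_empty_iff.2]
      · simp
      · intro e he hm
        simp only [Finset.mem_image, Finset.mem_range] at he
        obtain ⟨i, hi', rfl⟩ := he
        rw [Sym2.mem_iff] at hm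
        rcases hm with rfl | rfl
        · exact hx ⟨i, by omega, rfl⟩
        · exact hx ⟨i + 1, by omega, rfl⟩

/-- Nonzero pattern off the diagonal. -/
def Pat (G : SimpleGraph V) (A : Matrix V V ℝ) : Prop := ∀ i j, i ≠ j → (A i j ≠ 0 ↔ G.Adj i j)

theorem Pat.zero {G : SimpleGraph V} {A : Matrix V V ℝ} (h : Pat G A) {i j : V} (hij : i ≠ j)
    (ha : ¬ G.Adj i j) : A i j = 0 := by
  by_contra h0
  exact ha ((h i j hij).1 h0)

theorem Pat.addD {G : SimpleGraph V} {A : Matrix V V ℝ} (h : Pat G A) (u : V) (c : ℝ) :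
    Pat G (addD A u c) := by
  intro i j hij
  have : _root_.addD A u c i j = A i j := by
    unfold _root_.addD
    rw [if_neg]
    · simp
    · rintro ⟨rfl, rfl⟩; exact hij rfl
  rw [this]; exact h i j hij

theorem upper {G : SimpleGraph V} (hG : G.IsAcyclic) : ∀ (k : ℕ) (S : Finset V), S.card = k →
    ∀ (A : Matrix V V ℝ), Pat G A → ∀ E : Finset (Sym2 V),
      (∀ e ∈ E, e ∈ G.edgeSet ∧ ∀ x ∈ e, x ∈ S) → (∀ x, (E.filter (x ∈ ·)).card ≤ 2) →
      Module.finrank ℝ (KK A S) + E.card ≤ S.card := by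
  intro k
  induction k using Nat.strong_induction_on with
  | _ k ih =>
  intro S hSk A hA E hE hE2
  rcases S.eq_empty_or_nonempty with rfl | hS
  · have h1 : KK A ∅ = ⊥ := by
      rw [eq_bot_iff]
      rintro x ⟨h1, _⟩
      exact funext fun i => h1 i (by simp)
    have h2 : E = ∅ := by
      rw [Finset.eq_empty_iff_forall_notMem]
      intro e he
      induction e with
      | _ a b => simpa using (hE _ he).2 a (by simp)
    rw [h1, h2]; simp
  obtain ⟨v, hv, h⟩ := good_leaf hG hS
  have hcard := Finset.card_erase_add_one hv
  have sub : ∀ W : Finset V, ∀ e ∈ E.filter (fun e => ∀ x ∈ e, x ∈ W),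
      e ∈ G.edgeSet ∧ ∀ x ∈ e, x ∈ W := by
    intro W e he
    obtain ⟨h1, h2⟩ := Finset.mem_filter.1 he
    exact ⟨(hE e h1).1, h2⟩
  have sub2 : ∀ W : Finset V, ∀ x,
      ((E.filter (fun e => ∀ x ∈ e, x ∈ W)).filter (x ∈ ·)).card ≤ 2 := by
    intro W x
    refine (Finset.card_le_card ?_).trans (hE2 x)
    exact Finset.filter_subset_filter _ (Finset.filter_subset _ _)
  rcases h with h | ⟨u, hu, hvu, honly, -⟩
  · have h1 := isol_le (A := A) (S := S) (v := v)
      (fun i hi hiv => hA.zero hiv (fun ha => h i hi ha.symm))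
    have h2 := ih _ (by omega) (S.erase v) rfl A hA E (by
      intro e he
      refine ⟨(hE e he).1, fun x hx => Finset.mem_erase.2 ⟨?_, (hE e he).2 x hx⟩⟩
      rintro rfl
      obtain ⟨y, rfl⟩ := Sym2.mem_iff_exists.1 hx
      exact h y ((hE _ he).2 y (by simp)) (hE _ he).1) hE2
    omega
  · have hne : v ≠ u := hvu.ne
    have hr : ∀ i ∈ S, i ≠ u → i ≠ v → A v i = 0 := fun i hi h1 h2 =>
      hA.zero h2.symm (fun ha => h1 (honly i hi ha))
    have hc : ∀ i ∈ S, i ≠ u → i ≠ v → A i v = 0 := fun i hi h1 h2 =>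
      hA.zero h2 (fun ha => h1 (honly i hi ha.symm))
    have hve : ∀ e ∈ E, v ∈ e → e = s(v, u) := by
      intro e he hx
      obtain ⟨y, rfl⟩ := Sym2.mem_iff_exists.1 hx
      rw [honly y ((hE _ he).2 y (by simp)) (hE _ he).1]
    by_cases ha : A v v = 0
    · rw [elim2 hne hv hu hr hc ha ((hA v u hne).2 hvu) ((hA u v hne.symm).2 hvu.symm)]
      have hcard2 := Finset.card_erase_add_one (s := S.erase v) (a := u)
        (Finset.mem_erase.2 ⟨hne.symm, hu⟩)
      have h2 := ih _ (by omega) ((S.erase v).erase u) rfl A hA _ (sub _) (sub2 _)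
      have h3 : E.card ≤ (E.filter (fun e => ∀ x ∈ e, x ∈ (S.erase v).erase u)).card + 2 := by
        refine le_trans ?_ (Nat.add_le_add_left (hE2 u) _)
        refine le_trans (Finset.card_le_card ?_) (Finset.card_union_le _ _)
        intro e he
        by_cases hue : u ∈ e
        · exact Finset.mem_union_right _ (Finset.mem_filter.2 ⟨he, hue⟩)
        · refine Finset.mem_union_left _ (Finset.mem_filter.2 ⟨he, fun x hx => ?_⟩)
          refine Finset.mem_erase.2 ⟨?_, Finset.mem_erase.2 ⟨?_, (hE e he).2 x hx⟩⟩
          · rintro rfl; exact hue hx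
          · rintro rfl
            apply hue
            rw [hve e he hx]; simp
      omega
    · rw [elim1 hne hv hu hr hc ha]
      have h2 := ih _ (by omega) (S.erase v) rfl _
        (hA.addD u (-(A u v * A v u / A v v))) _ (sub _) (sub2 _)
      have h3 : E.card ≤ (E.filter (fun e => ∀ x ∈ e, x ∈ S.erase v)).card + 1 := by
        have h4 : ({s(v, u)} : Finset (Sym2 V)).card = 1 := by simp
        rw [← h4]
        refine le_trans (Finset.card_le_card ?_) (Finset.card_union_le _ _)
        intro e he
        by_cases hve' : v ∈ e
        · exact Finset.mem_union_right _ (by simpa using hve e he hve')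
        · refine Finset.mem_union_left _ (Finset.mem_filter.2 ⟨he, fun x hx => ?_⟩)
          refine Finset.mem_erase.2 ⟨?_, (hE e he).2 x hx⟩
          rintro rfl; exact hve' hx
      omega

theorem upper_cover {G : SimpleGraph V} (hG : G.IsAcyclic) {A : Matrix V V ℝ} (hA : Pat G A)
    (P : Finset (Finset V)) (hP : ∀ s ∈ P, IsPathSet G s) (hv : ∀ v : V, ∃! s, s ∈ P ∧ v ∈ s) :
    Module.finrank ℝ (KK A Finset.univ) ≤ P.card := by
  have hed : ∀ s ∈ P, ∃ E : Finset (Sym2 V), s.card ≤ E.card + 1 ∧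
      (∀ e ∈ E, e ∈ G.edgeSet ∧ ∀ x ∈ e, x ∈ s) ∧ ∀ x, (E.filter (x ∈ ·)).card ≤ 2 := by
    intro s hs
    rcases s.eq_empty_or_nonempty with rfl | hn
    · exact ⟨∅, by simp⟩
    · exact ((hP s hs).ps hn).edges
  choose! E h1 h2 h3 using hed
  have huniq : ∀ s ∈ P, ∀ t ∈ P, ∀ x, x ∈ s → x ∈ t → s = t := fun s hs t ht x hxs hxt =>
    (hv x).unique ⟨hs, hxs⟩ ⟨ht, hxt⟩
  have c1 : (P.biUnion E).card = ∑ s ∈ P, (E s).card := by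
    refine Finset.card_biUnion fun s hs t ht hst => ?_
    refine Finset.disjoint_left.2 ?_
    intro e he he'
    induction e with
    | _ a b =>
      exact hst (huniq s hs t ht a ((h2 s hs _ he).2 a (by simp)) ((h2 t ht _ he').2 a (by simp)))
  have c2 : (P.biUnion id).card = ∑ s ∈ P, s.card := by
    refine Finset.card_biUnion fun s hs t ht hst => ?_
    refine Finset.disjoint_left.2 ?_
    intro e he he'
    exact hst (huniq s hs t ht e he he')
  have c3 : P.biUnion id = Finset.univ := by
    ext x
    obtain ⟨s, ⟨hs, hx⟩, -⟩ := hv x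
    simp only [Finset.mem_biUnion, Finset.mem_univ, iff_true]
    exact ⟨s, hs, hx⟩
  have c4 : ∑ s ∈ P, s.card ≤ ∑ s ∈ P, ((E s).card + 1) := Finset.sum_le_sum h1
  rw [Finset.sum_add_distrib] at c4
  have := upper hG _ Finset.univ rfl A hA (P.biUnion E) (by
    intro e he
    obtain ⟨s, hs, he⟩ := Finset.mem_biUnion.1 he
    exact ⟨(h2 s hs e he).1, by simp⟩) (by
    intro x
    obtain ⟨s, ⟨hs, hx⟩, -⟩ := hv x
    refine (Finset.card_le_card ?_).trans (h3 s hs x)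
    intro e he
    simp only [Finset.mem_filter, Finset.mem_biUnion] at he ⊢
    obtain ⟨⟨t, ht, he⟩, hxe⟩ := he
    have := huniq s hs t ht x hx ((h2 t ht e he).2 x hxe)
    subst this
    exact ⟨he, hxe⟩)
  rw [← c3] at this ⊢
  simp at c4
  omega

theorem PS.singleton (G : SimpleGraph V) (v : V) : PS G {v} := by
  refine ⟨1, fun _ => v, ?_, ?_, ?_⟩
  · intro i hi j hj _; omega
  · intro i hi j hj
    simp; omega
  · intro x
    simp only [Finset.mem_singleton]
    constructor
    · rintro rfl; exact ⟨0, by omega, rfl⟩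
    · rintro ⟨_, _, rfl⟩; rfl

theorem PS.append {G : SimpleGraph V} {s : Finset V} (h : PS G s) {u v : V} (hu : u ∈ s)
    (hv : v ∉ s) (hadj : G.Adj v u) (honly : ∀ x ∈ s, G.Adj v x → x = u)
    (hend : ∃ w, ∀ x ∈ s, G.Adj u x → x = w) : PS G (insert v s) := by
  have hend' : ∃ (k : ℕ) (f : ℕ → V), (∀ i < k + 1, ∀ j < k + 1, f i = f j → i = j) ∧
      (∀ i < k + 1, ∀ j < k + 1, G.Adj (f i) (f j) ↔ i + 1 = j ∨ j + 1 = i) ∧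
      (∀ x, x ∈ s ↔ ∃ i < k + 1, f i = x) ∧ f k = u := by
    obtain ⟨m, f, hi, ha, hs⟩ := h
    obtain ⟨i, him, rfl⟩ := (hs u).1 hu
    obtain ⟨w, hw⟩ := hend
    by_cases h1 : i = m - 1
    · refine ⟨i, f, ?_, ?_, ?_, rfl⟩
      all_goals
        have : i + 1 = m := by omega
        rw [this]; assumption
    · by_cases h0 : i = 0
      · subst h0
        have hm : m - 1 + 1 = m := by omega
        refine ⟨m - 1, fun j => f (m - 1 - j), ?_, ?_, ?_, by simp⟩
        · intro a ha' b hb hab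
          have := hi _ (by omega) _ (by omega) hab
          omega
        · intro a ha' b hb
          rw [ha _ (by omega) _ (by omega)]
          omega
        · intro x
          rw [hs]
          constructor
          · rintro ⟨j, hj, rfl⟩
            exact ⟨m - 1 - j, by omega, congrArg f (by omega)⟩
          · rintro ⟨j, hj, rfl⟩
            exact ⟨m - 1 - j, by omega, rfl⟩
      · exfalso
        have e1 := hw (f (i - 1)) ((hs _).2 ⟨i - 1, by omega, rfl⟩)
          ((ha _ (by omega) _ (by omega)).2 (by omega))
        have e2 := hw (f (i + 1)) ((hs _).2 ⟨i + 1, by omega, rfl⟩)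
          ((ha _ (by omega) _ (by omega)).2 (by omega))
        have := hi _ (by omega) _ (by omega) (e1.trans e2.symm)
        omega
  obtain ⟨k, f, hi, ha, hs, hk⟩ := hend'
  have hfs : ∀ i < k + 1, f i ∈ s := fun i hi => (hs _).2 ⟨i, hi, rfl⟩
  have hvf : ∀ i < k + 1, (G.Adj v (f i) ↔ i = k) := by
    intro i hik
    constructor
    · intro h
      have := honly _ (hfs i hik) h
      rw [← hk] at this
      exact hi _ hik _ (by omega) this
    · rintro rfl; rw [hk]; exact hadj
  have hne : ∀ i < k + 1, f i ≠ v := fun i hik h => hv (h ▸ hfs i hik)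
  refine ⟨k + 2, fun i => if i < k + 1 then f i else v, ?_, ?_, ?_⟩
  · intro i hi' j hj' hij
    by_cases h1 : i < k + 1 <;> by_cases h2 : j < k + 1 <;> simp only [h1, h2, if_true, if_false] at hij
    · exact hi i h1 j h2 hij
    · exact absurd hij (hne i h1)
    · exact absurd hij.symm (hne j h2)
    · omega
  · intro i hi' j hj'
    by_cases h1 : i < k + 1 <;> by_cases h2 : j < k + 1 <;> simp only [h1, h2, if_true, if_false]
    · exact ha i h1 j h2
    · rw [G.adj_comm, hvf i h1]; omega
    · rw [hvf j h2]; omega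
    · simp; omega
  · intro x
    rw [Finset.mem_insert, hs]
    constructor
    · rintro (rfl | ⟨i, hik, rfl⟩)
      · exact ⟨k + 1, by omega, by simp⟩
      · exact ⟨i, by omega, by simp [hik]⟩
    · rintro ⟨i, hik, rfl⟩
      by_cases h1 : i < k + 1
      · right; exact ⟨i, h1, by simp [h1]⟩
      · left; simp [h1]

theorem PS.eq_singleton {G : SimpleGraph V} {s : Finset V} (h : PS G s) {v : V} (hv : v ∈ s)
    (hn : ∀ x ∈ s, ¬ G.Adj v x) : s = {v} := by
  obtain ⟨m, f, hi, ha, hs⟩ := h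
  obtain ⟨i, him, rfl⟩ := (hs v).1 hv
  have h1 : m = 1 := by
    by_contra h1
    by_cases h0 : i = 0
    · exact hn (f (i + 1)) ((hs _).2 ⟨i + 1, by omega, rfl⟩)
          ((ha _ (by omega) _ (by omega)).2 (by omega))
    · exact hn (f (i - 1)) ((hs _).2 ⟨i - 1, by omega, rfl⟩)
          ((ha _ (by omega) _ (by omega)).2 (by omega))
  subst h1
  ext x
  rw [hs, Finset.mem_singleton]
  constructor
  · rintro ⟨j, hj, rfl⟩
    congr 1; omega
  · rintro rfl; exact ⟨i, him, rfl⟩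

/-- `P` is a path cover of the vertex set `S`. -/
def Cov (G : SimpleGraph V) (S : Finset V) (P : Finset (Finset V)) : Prop :=
  (∀ s ∈ P, PS G s) ∧ (∀ s ∈ P, s ⊆ S) ∧ (∀ v ∈ S, ∃ s ∈ P, v ∈ s) ∧
    ∀ s ∈ P, ∀ t ∈ P, ∀ x, x ∈ s → x ∈ t → s = t

theorem Cov.add {G : SimpleGraph V} {S T : Finset V} {P : Finset (Finset V)} (h : Cov G S P)
    (hT : PS G T) (hd : Disjoint S T) : Cov G (S ∪ T) (insert T P) := by
  obtain ⟨h1, h2, h3, h4⟩ := h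
  rw [Finset.disjoint_left] at hd
  refine ⟨?_, ?_, ?_, ?_⟩
  · intro s hs
    rcases Finset.mem_insert.1 hs with rfl | hs
    · exact hT
    · exact h1 s hs
  · intro s hs
    rcases Finset.mem_insert.1 hs with rfl | hs
    · exact Finset.subset_union_right
    · exact (h2 s hs).trans Finset.subset_union_left
  · intro v hv
    rcases Finset.mem_union.1 hv with hv | hv
    · obtain ⟨s, hs, hvs⟩ := h3 v hv
      exact ⟨s, Finset.mem_insert_of_mem hs, hvs⟩
    · exact ⟨T, Finset.mem_insert_self _ _, hv⟩
  · intro s hs t ht x hxs hxt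
    rcases Finset.mem_insert.1 hs with e1 | hs' <;> rcases Finset.mem_insert.1 ht with e2 | ht'
    · rw [e1, e2]
    · exact absurd (e1 ▸ hxs) (hd (h2 t ht' hxt))
    · exact absurd (e2 ▸ hxt) (hd (h2 s hs' hxs))
    · exact h4 s hs' t ht' x hxs hxt

theorem Cov.erase {G : SimpleGraph V} {S s : Finset V} {P : Finset (Finset V)} (h : Cov G S P)
    (hs : s ∈ P) : Cov G (S \ s) (P.erase s) := by
  obtain ⟨h1, h2, h3, h4⟩ := h
  refine ⟨fun t ht => h1 t (Finset.mem_of_mem_erase ht), ?_, ?_, ?_⟩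
  · intro t ht x hx
    obtain ⟨hne, ht⟩ := Finset.mem_erase.1 ht
    exact Finset.mem_sdiff.2 ⟨h2 t ht hx, fun hxs => hne (h4 t ht s hs x hx hxs)⟩
  · intro v hv
    obtain ⟨hvS, hvs⟩ := Finset.mem_sdiff.1 hv
    obtain ⟨t, ht, hvt⟩ := h3 v hvS
    refine ⟨t, Finset.mem_erase.2 ⟨?_, ht⟩, hvt⟩
    rintro rfl; exact hvs hvt
  · intro t ht t' ht' 
    exact h4 t (Finset.mem_of_mem_erase ht) t' (Finset.mem_of_mem_erase ht')

theorem Cov.replace {G : SimpleGraph V} {S S' s t : Finset V} {P : Finset (Finset V)}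
    (h : Cov G S P) (hs : s ∈ P) (ht : PS G t) (hst : s ⊆ t) (hd : ∀ x ∈ t, x ∈ S → x ∈ s)
    (hS : S' = S ∪ t) : ∃ P' : Finset (Finset V), Cov G S' P' ∧ P'.card ≤ P.card := by
  refine ⟨insert t (P.erase s), ?_, ?_⟩
  · have := (h.erase hs).add ht (by
      rw [Finset.disjoint_left]
      intro x hx hxt
      obtain ⟨hx1, hx2⟩ := Finset.mem_sdiff.1 hx
      exact hx2 (hd x hxt hx1))
    have e : S' = S \ s ∪ t := by
      rw [hS]
      ext x
      have := @hst x
      simp only [Finset.mem_union, Finset.mem_sdiff]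
      tauto
    rw [e]; exact this
  · have := Finset.card_erase_add_one hs
    exact (Finset.card_insert_le _ _).trans this.le

theorem addD_symm {A : Matrix V V ℝ} (h : A.IsSymm) (u : V) (c : ℝ) : (addD A u c).IsSymm := by
  ext i j
  simp only [Matrix.transpose_apply, addD, h.apply i j, and_comm]

theorem lower {G : SimpleGraph V} (hG : G.IsAcyclic) : ∀ (k : ℕ) (S : Finset V), S.card = k →
    ∃ (A : Matrix V V ℝ) (P : Finset (Finset V)), A.IsSymm ∧ Pat G A ∧ Cov G S P ∧
      P.card ≤ Module.finrank ℝ (KK A S) := by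
  intro k
  induction k using Nat.strong_induction_on with
  | _ k ih =>
  intro S hSk
  rcases S.eq_empty_or_nonempty with rfl | hS
  · classical
    refine ⟨G.adjMatrix ℝ, ∅, G.isSymm_adjMatrix, ?_, ?_, by simp⟩
    · intro i j _
      simp [SimpleGraph.adjMatrix_apply]
    · simp [Cov]
  obtain ⟨v, hv, h⟩ := good_leaf hG hS
  have hcard := Finset.card_erase_add_one hv
  rcases h with h | ⟨u, hu, hvu, honly, hcase⟩
  · obtain ⟨B, P, hB1, hB2, hP, hle⟩ := ih _ (by omega) (S.erase v) rfl
    set A := addD B v (-B v v) with hAdef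
    have hA2 : Pat G A := hB2.addD _ _
    have hvv : A v v = 0 := by simp [hAdef, addD]
    have e : KK A (S.erase v) = KK B (S.erase v) := by
      refine KK_congr fun i hi j hj => ?_
      simp [hAdef, addD, Finset.ne_of_mem_erase hi]
    have h2 := isol_ge (A := A) hv
      (fun i hi => by
        by_cases hiv : i = v
        · rw [hiv]; exact hvv
        · exact hA2.zero hiv (fun ha => h i hi ha.symm))
      (fun i hi => by
        by_cases hiv : i = v
        · rw [hiv]; exact hvv
        · exact hA2.zero (Ne.symm hiv) (fun ha => h i hi ha))
    rw [e] at h2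
    have h3 := hP.add (PS.singleton G v) (by simp)
    have e2 : S.erase v ∪ {v} = S := by
      rw [Finset.union_comm, ← Finset.insert_eq, Finset.insert_erase hv]
    rw [e2] at h3
    refine ⟨A, _, addD_symm hB1 _ _, hA2, h3, ?_⟩
    have := Finset.card_insert_le {v} P
    omega
  have hne : v ≠ u := hvu.ne
  have hr : ∀ A, Pat G A → ∀ i ∈ S, i ≠ u → i ≠ v → A v i = 0 := fun A hA i hi h1 h2 =>
    hA.zero h2.symm (fun ha => h1 (honly i hi ha))
  have hc : ∀ A, Pat G A → ∀ i ∈ S, i ≠ u → i ≠ v → A i v = 0 := fun A hA i hi h1 h2 =>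
    hA.zero h2 (fun ha => h1 (honly i hi ha.symm))
  rcases hcase with ⟨w, hw⟩ | ⟨x, hx, hxv, hux, hxonly⟩
  · obtain ⟨B, P, hB1, hB2, hP, hle⟩ := ih _ (by omega) (S.erase v) rfl
    set A := addD (addD B v (1 - B v v)) u (B u v * B v u) with hAdef
    have hA2 : Pat G A := (hB2.addD _ _).addD _ _
    have hvv : A v v = 1 := by simp [hAdef, addD, hne]
    have huv : A u v = B u v := by simp [hAdef, addD, hne, hne.symm]
    have hvu' : A v u = B v u := by simp [hAdef, addD, hne, hne.symm]
    have e1 := elim1 hne hv hu (hr A hA2) (hc A hA2) (by rw [hvv]; simp)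
    have e : KK (addD A u (-(A u v * A v u / A v v))) (S.erase v) = KK B (S.erase v) := by
      refine KK_congr fun i hi j hj => ?_
      rw [hvv, huv, hvu']
      simp only [hAdef, addD, Finset.ne_of_mem_erase hi, false_and, if_false]
      split_ifs <;> ring
    rw [e] at e1
    obtain ⟨s, hs, hus⟩ := hP.2.2.1 u (Finset.mem_erase.2 ⟨hne.symm, hu⟩)
    have hsS := hP.2.1 s hs
    have hvs : v ∉ s := fun h => by simpa using hsS h
    have hps : PS G (insert v s) := (hP.1 s hs).append hus hvs hvu
      (fun y hy => honly y (Finset.mem_of_mem_erase (hsS hy)))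
      ⟨w, fun y hy ha => (hw y (Finset.mem_of_mem_erase (hsS hy)) ha).resolve_left
        (Finset.ne_of_mem_erase (hsS hy))⟩
    obtain ⟨P', hP', hle'⟩ := hP.replace (S' := S) hs hps (Finset.subset_insert _ _)
      (by
        intro y hy hyS
        exact (Finset.mem_insert.1 hy).resolve_left (Finset.ne_of_mem_erase hyS))
      (by
        ext y
        have := @hsS y
        simp only [Finset.mem_union, Finset.mem_insert, Finset.mem_erase] at this ⊢
        by_cases hyv : y = v
        · subst hyv; simp [hv]
        · tauto)
    exact ⟨A, P', addD_symm (addD_symm hB1 _ _) _ _, hA2, hP', by omega⟩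
  · have hcard2 := Finset.card_erase_add_one (s := S.erase v) (a := u)
        (Finset.mem_erase.2 ⟨hne.symm, hu⟩)
    obtain ⟨B, P, hB1, hB2, hP, hle⟩ := ih _ (by omega) ((S.erase v).erase u) rfl
    set A := addD B v (-B v v) with hAdef
    have hA2 : Pat G A := hB2.addD _ _
    have hvv : A v v = 0 := by simp [hAdef, addD]
    have e : KK A ((S.erase v).erase u) = KK B ((S.erase v).erase u) := by
      refine KK_congr fun i hi j hj => ?_
      simp [hAdef, addD, Finset.ne_of_mem_erase (Finset.mem_of_mem_erase hi)]
    have e1 := elim2 hne hv hu (hr A hA2) (hc A hA2) hvv ((hA2 v u hne).2 hvu)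
      ((hA2 u v hne.symm).2 hvu.symm)
    rw [e] at e1
    have hxu : x ≠ u := hux.ne.symm
    obtain ⟨s, hs, hxs⟩ := hP.2.2.1 x (by simp [hxu, hxv, hx])
    have hsS := hP.2.1 s hs
    have hs1 : s = {x} := (hP.1 s hs).eq_singleton hxs (by
      intro y hy ha
      have hy' := hsS hy
      simp only [Finset.mem_erase] at hy'
      exact hy'.1 (hxonly y hy'.2.2 ha))
    subst hs1
    have p1 : PS G (insert u {x}) := (PS.singleton G x).append (u := x) (by simp)
      (by simpa using hxu.symm) hux (by simp) ⟨u, by simp⟩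
    have p2 : PS G (insert v (insert u {x})) := p1.append (u := u) (by simp)
      (by simp [hne, hxv.symm]) hvu
      (by
        intro y hy ha
        simp only [Finset.mem_insert, Finset.mem_singleton] at hy
        rcases hy with rfl | rfl
        · rfl
        · exact honly _ hx ha)
      ⟨x, by
        intro y hy ha
        simp only [Finset.mem_insert, Finset.mem_singleton] at hy
        rcases hy with rfl | rfl
        · exact absurd ha (by simp)
        · rfl⟩
    obtain ⟨P', hP', hle'⟩ := hP.replace (S' := S) hs p2
      (by intro y hy; simp at hy; simp [hy])
      (by
        intro y hy hyS
        simp only [Finset.mem_insert, Finset.mem_singleton, Finset.mem_erase] at hy hyS ⊢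
        tauto)
      (by
        ext y
        simp only [Finset.mem_union, Finset.mem_insert, Finset.mem_erase, Finset.mem_singleton]
        by_cases hyv : y = v
        · subst hyv; simp [hv]
        · by_cases hyu : y = u
          · subst hyu; simp [hu]
          · by_cases hyx : y = x
            · subst hyx; simp [hx]
            · tauto)
    exact ⟨A, P', addD_symm hB1 _ _, hA2, hP', by omega⟩

end PCmain

/-- Johnson–Duarte: mr(T) + P(T) = n for a tree T on n vertices. -/
theorem stmt10 {n : ℕ} (T : SimpleGraph (Fin n)) (hT : T.IsTree) :
    mr T + pathCoverNumber T = n := by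
  have hG := hT.isAcyclic
  obtain ⟨A, P, hA1, hA2, hP, hle⟩ := lower hG _ Finset.univ rfl
  have hP1 : ∀ s ∈ P, IsPathSet T s := fun s hs => (hP.1 s hs).isPathSet
  have hP2 : ∀ v : Fin n, ∃! s, s ∈ P ∧ v ∈ s := by
    intro v
    obtain ⟨s, hs, hvs⟩ := hP.2.2.1 v (by simp)
    exact ⟨s, ⟨hs, hvs⟩, fun t ht => hP.2.2.2 t ht.1 s hs v ht.2 hvs⟩
  have hub := upper_cover hG hA2 P hP1 hP2
  have hmr : mr T = A.rank := by
    unfold mr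
    apply le_antisymm
    · exact Nat.sInf_le ⟨A, ⟨hA1, hA2⟩, rfl⟩
    · refine le_csInf ⟨_, A, ⟨hA1, hA2⟩, rfl⟩ ?_
      rintro r ⟨B, hB, rfl⟩
      have h1 := upper_cover hG (A := B) hB.2 P hP1 hP2
      have h2 := KK_rank A
      have h3 := KK_rank B
      omega
  have hpc : pathCoverNumber T = P.card := by
    unfold pathCoverNumber
    apply le_antisymm
    · exact Nat.sInf_le ⟨P, rfl, hP1, hP2⟩
    · refine le_csInf ⟨_, P, rfl, hP1, hP2⟩ ?_
      rintro r ⟨Q, rfl, hQ1, hQ2⟩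
      have h1 := upper_cover hG hA2 Q hQ1 hQ2
      omega
  have h2 := KK_rank A
  rw [hmr, hpc]
  omega
end

section
/- Let T be a tree on n vertices with vertex set V. Define f_T(S) = |E_T(S)| − 2|S| + 1, where E_T(S) is the set of edges of T incident to at least one vertex of S. Then the path cover number satisfies P(T) = max over all S ⊆ V of f_T(S), and this maximum also equals the maximum over 0 ≤ k ≤ n of (M_k(T) − k). -/
open Matrix

/-- The set of edges of `G` incident to at least one vertex of `S`. -/
def ETset {n : ℕ} (G : SimpleGraph (Fin n)) (S : Finset (Fin n)) : Set (Sym2 (Fin n)) :=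
  {e ∈ G.edgeSet | ∃ v ∈ S, v ∈ e}

/-- f_G(S) = |E_G(S)| − 2|S| + 1. -/
noncomputable def fT {n : ℕ} (G : SimpleGraph (Fin n)) (S : Finset (Fin n)) : ℤ :=
  ((ETset G S).ncard : ℤ) - 2 * S.card + 1

namespace TPC
open SimpleGraph

lemma exists_leaf {V : Type*} [Finite V] (F : SimpleGraph V) (hF : F.IsAcyclic)
    (hne : F.edgeSet.Nonempty) :
    ∃ v u, F.Adj v u ∧ ∀ w, F.Adj v w → w = u := by
  classical
  obtain ⟨e, he⟩ := hne
  induction e with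
  | _ a b =>
  have hab : F.Adj a b := he
  have : Nonempty V := ⟨a⟩
  obtain ⟨x, v, p, hp, hmax⟩ := Walk.exists_isPath_forall_isPath_length_le_length F
  have hnn : ¬ p.Nil := by
    intro hn
    have := hmax a b (Walk.cons hab Walk.nil) (by simp [hab.ne])
    have h0 := Walk.length_eq_zero_iff.2 hn
    simp at this
    omega
  refine ⟨v, p.penultimate, (p.adj_penultimate hnn).symm, fun w hw => ?_⟩
  refine hF.eq_penultimate_of_adj_end hp hw ?_
  by_contra hns
  have := hmax _ _ (p.concat hw) (hp.concat hns hw)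
  simp at this

lemma iso_path {V : Type*} [Finite V] (H : SimpleGraph V) (hH : H.IsTree)
    (hd : ∀ v, (H.neighborSet v).ncard ≤ 2) :
    ∃ m, Nonempty (H ≃g pathGraph m) := by
  classical
  have := hH.connected.nonempty
  obtain ⟨x, y, p, hp, hmax⟩ := Walk.exists_isPath_forall_isPath_length_le_length H
  have hend : ∀ {x y : V} (p : H.Walk x y), p.IsPath →
      (∀ u' v' (q : H.Walk u' v'), q.IsPath → q.length ≤ p.length) →
      ∀ w, H.Adj y w → p.toSubgraph.Adj y w := by
    intro x y p hp hmax w hw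
    have hs : w ∈ p.support := by
      by_contra hns
      have := hmax _ _ (p.concat hw) (hp.concat hns hw)
      simp at this
    have hnn : ¬ p.Nil := by
      intro hn
      have := hmax y w (Walk.cons hw Walk.nil) (by simp [hw.ne])
      have h0 := Walk.length_eq_zero_iff.2 hn
      simp at this
      omega
    rw [hH.isAcyclic.eq_penultimate_of_adj_end hp hw hs]
    exact (p.toSubgraph_adj_penultimate hnn).symm
  have key : ∀ a ∈ p.support, ∀ w, H.Adj a w → p.toSubgraph.Adj a w := by
    intro a ha w hw
    obtain ⟨i, rfl, hi⟩ := Walk.mem_support_iff_exists_getVert.1 ha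
    rcases Nat.eq_zero_or_pos i with rfl | hpos
    · have := hend p.reverse hp.reverse (by simpa using hmax) w (by simpa using hw)
      simpa using this
    rcases hi.eq_or_lt with rfl | hlt
    · have := hend p hp hmax w (by simpa using hw)
      simpa using this
    · have h2 := hp.ncard_neighborSet_toSubgraph_internal_eq_two hpos.ne' hlt
      have hsub : p.toSubgraph.neighborSet (p.getVert i) ⊆ H.neighborSet (p.getVert i) :=
        Subgraph.neighborSet_subset _ _
      have := Set.eq_of_subset_of_ncard_le hsub (by rw [h2]; exact hd _) (Set.toFinite _)
      have hw' : w ∈ H.neighborSet (p.getVert i) := hw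
      rw [← this] at hw'
      exact hw'
  have hall : ∀ a, a ∈ p.support := by
    intro a
    obtain ⟨q⟩ := hH.connected.preconnected x a
    have : ∀ {s t : V} (q : H.Walk s t), s ∈ p.support → t ∈ p.support := by
      intro s t q
      induction q with
      | nil => exact id
      | cons h q ih =>
        intro hs
        exact ih (Walk.mem_support_of_adj_toSubgraph (key _ hs _ h).symm)
    exact this q p.start_mem_support
  have htop : p.toSubgraph = ⊤ := by
    ext a b
    · simp [hall]
    · simp only [Subgraph.top_adj]
      exact ⟨fun h => h.adj_sub, fun h => key a (hall a) b h⟩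
  have e1 := hp.pathGraphIsoToSubgraph
  rw [htop] at e1
  exact ⟨_, ⟨(e1.trans Subgraph.topIso).symm⟩⟩

lemma card_comp {V : Type*} [Finite V] (H : SimpleGraph V) (hH : H.IsAcyclic) :
    Nat.card H.ConnectedComponent + H.edgeSet.ncard = Nat.card V := by
  classical
  have := Fintype.ofFinite V
  have hV : Nat.card V = ∑ c : H.ConnectedComponent, Fintype.card c.supp := by
    rw [Nat.card_eq_fintype_card, ← Fintype.card_sigma]
    exact Fintype.card_congr (Equiv.sigmaFiberEquiv H.connectedComponentMk).symm
  have hs : ∑ v, H.degree v = ∑ c : H.ConnectedComponent, ∑ v : c.supp, H.degree v := by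
    rw [← Fintype.sum_sigma']
    let e : (Σ c : H.ConnectedComponent, c.supp) ≃ V :=
      Equiv.sigmaFiberEquiv H.connectedComponentMk
    exact (Equiv.sum_comp e (fun v => H.degree v)).symm
  have hdeg : ∀ (c : H.ConnectedComponent) (v : c.supp),
      H.degree v = (H.induce c.supp).degree v := by
    intro c v
    rw [← card_neighborFinset_eq_degree, ← card_neighborFinset_eq_degree]
    symm
    refine Finset.card_bij (fun w _ => (w : V)) ?_ ?_ ?_
    · intro w hw
      rw [mem_neighborFinset] at hw ⊢
      exact hw
    · intro a _ b _ h
      exact Subtype.ext h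
    · intro w hw
      have hw : H.Adj v w := by simpa using hw
      have hm : w ∈ c.supp := by
        have := v.2
        rw [ConnectedComponent.mem_supp_iff] at this ⊢
        rw [← this]
        exact (ConnectedComponent.connectedComponentMk_eq_of_adj hw).symm
      refine ⟨⟨w, hm⟩, ?_, rfl⟩
      rw [mem_neighborFinset]
      exact hw
  have hc : ∀ c : H.ConnectedComponent, ∑ v : c.supp, H.degree v + 2 = 2 * Fintype.card c.supp := by
    intro c
    have h1 := (H.induce c.supp).sum_degrees_eq_twice_card_edges
    have ht : (H.induce c.supp).IsTree := hH.isTree_connectedComponent c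
    have h2 := ht.card_edgeFinset
    simp only [hdeg]
    rw [h1, ← h2]
    ring
  have h4 := H.sum_degrees_eq_twice_card_edges
  have h5 : ∑ c : H.ConnectedComponent, (∑ v : c.supp, H.degree v + 2) = 2 * Nat.card V := by
    rw [hV, Finset.mul_sum]
    exact Finset.sum_congr rfl fun c _ => hc c
  rw [Finset.sum_add_distrib, ← hs, h4] at h5
  simp at h5
  rw [Nat.card_eq_fintype_card, Nat.card_eq_fintype_card, ← Set.ncard_coe_finset H.edgeFinset ] at *
  simp at h5
  omega


lemma matching {V : Type*} [Fintype V] [DecidableEq V] (N : ℕ) :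
    ∀ (F : SimpleGraph V), F.IsAcyclic → F.edgeSet.ncard = N → ∀ b : V → ℕ,
    ∃ H ≤ F, ∃ S : Finset V, (∀ v, (H.neighborSet v).ncard ≤ b v) ∧
      ∑ v ∈ S, b v + {e ∈ F.edgeSet | ∀ v ∈ S, v ∉ e}.ncard ≤ H.edgeSet.ncard := by
  induction N with
  | zero =>
    intro F hF h0 b
    have hE : F.edgeSet = ∅ := (Set.ncard_eq_zero (Set.toFinite _)).1 h0
    refine ⟨⊥, bot_le, ∅, ?_, ?_⟩
    · intro v
      simp
    · simp [hE]
  | succ N ih =>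
    intro F hF hN b
    obtain ⟨v, u, hvu, hleaf⟩ := exists_leaf F hF (by
      rw [← Set.ncard_pos (Set.toFinite _)]; omega)
    set F' := F.deleteEdges {s(v, u)} with hF'
    have hle : F' ≤ F := deleteEdges_le _
    have hac : F'.IsAcyclic := hF.anti hle
    have hes : F'.edgeSet = F.edgeSet \ {s(v, u)} := edgeSet_deleteEdges _
    have hcard : F'.edgeSet.ncard = N := by
      rw [hes, Set.ncard_sdiff_singleton_of_mem (show s(v, u) ∈ F.edgeSet from hvu)]; omega
    have hvF' : ∀ w, ¬ F'.Adj v w := by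
      intro w hw
      rw [hF', deleteEdges_adj] at hw
      have := hleaf w hw.1
      subst this
      exact hw.2 rfl
    by_cases hb0 : ∃ x, (x = u ∨ x = v) ∧ b x = 0
    · obtain ⟨x, hx, hbx⟩ := hb0
      obtain ⟨H, hH, S, hdeg, hS⟩ := ih F' hac hcard b
      refine ⟨H, hH.trans hle, insert x S, hdeg, le_trans (add_le_add ?_ ?_) hS⟩
      · by_cases hxS : x ∈ S
        · rw [Finset.insert_eq_of_mem hxS]
        · rw [Finset.sum_insert hxS, hbx, zero_add]
      · refine Set.ncard_le_ncard ?_ (Set.toFinite _)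
        rintro e ⟨he, hne⟩
        refine ⟨?_, fun y hy => hne y (Finset.mem_insert_of_mem hy)⟩
        rw [hes]
        refine ⟨he, ?_⟩
        rintro rfl
        refine hne x (Finset.mem_insert_self _ _) ?_
        rcases hx with rfl | rfl <;> simp
    · have hbu : 0 < b u := by
        rcases Nat.eq_zero_or_pos (b u) with h | h
        · exact absurd ⟨u, Or.inl rfl, h⟩ hb0
        · exact h
      have hbv : 0 < b v := by
        rcases Nat.eq_zero_or_pos (b v) with h | h
        · exact absurd ⟨v, Or.inr rfl, h⟩ hb0
        · exact h
      obtain ⟨H, hH, S, hdeg, hS⟩ := ih F' hac hcard (Function.update b u (b u - 1))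
      have hnvu : ¬ H.Adj v u := fun h => hvF' u (hH h)
      have hHe : (H ⊔ edge v u).edgeSet = insert s(v, u) H.edgeSet := by
        rw [edgeSet_sup, edgeSet_edge_of_ne hvu.ne, Set.union_singleton]
      refine ⟨H ⊔ edge v u, ?_, S.erase v, ?_, ?_⟩
      · refine sup_le (hH.trans hle) ?_
        rw [edge_le_iff]
        exact Or.inr hvu
      · intro w
        by_cases hwu : w = u
        · subst hwu
          have hsub : (H ⊔ edge v w).neighborSet w ⊆ insert v (H.neighborSet w) := by
            intro y hy
            simp only [mem_neighborSet, sup_adj, edge_adj] at hy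
            simp only [Set.mem_insert_iff, mem_neighborSet]
            rcases hy with h | h
            · exact Or.inr h
            · left; grind
          refine (Set.ncard_le_ncard hsub (Set.toFinite _)).trans ?_
          refine (Set.ncard_insert_le _ _).trans ?_
          have := hdeg w
          rw [Function.update_self] at this
          omega
        by_cases hwv : w = v
        · subst hwv
          have hsub : (H ⊔ edge w u).neighborSet w ⊆ {u} := by
            intro y hy
            exact hleaf y (((sup_le (hH.trans hle) (by rw [edge_le_iff]; exact Or.inr hvu)) : H ⊔ edge w u ≤ F) hy)
          refine (Set.ncard_le_ncard hsub (Set.toFinite _)).trans ?_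
          rw [Set.ncard_singleton]
          exact hbv
        · have hsub : (H ⊔ edge v u).neighborSet w ⊆ H.neighborSet w := by
            intro y hy
            simp only [mem_neighborSet, sup_adj, edge_adj] at hy ⊢
            grind
          refine (Set.ncard_le_ncard hsub (Set.toFinite _)).trans ?_
          have := hdeg w
          rwa [Function.update_of_ne hwu] at this
      · rw [hHe, Set.ncard_insert_of_notMem (show s(v, u) ∉ H.edgeSet from hnvu)]
        have hA : ∑ x ∈ S.erase v, Function.update b u (b u - 1) x
            ≤ ∑ x ∈ S, Function.update b u (b u - 1) x :=
          Finset.sum_le_sum_of_subset (Finset.erase_subset _ _)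
        have hE' : {e ∈ F'.edgeSet | ∀ x ∈ S.erase v, x ∉ e}.ncard
            ≤ {e ∈ F'.edgeSet | ∀ x ∈ S, x ∉ e}.ncard := by
          refine Set.ncard_le_ncard ?_ (Set.toFinite _)
          rintro e ⟨he, hne⟩
          refine ⟨he, fun y hy hye => ?_⟩
          by_cases hyv : y = v
          · subst hyv
            obtain ⟨z, rfl⟩ := Sym2.mem_iff_exists.1 hye
            exact hvF' z he
          · exact hne y (Finset.mem_erase.2 ⟨hyv, hy⟩) hye
        by_cases huS : u ∈ S
        · have huS' : u ∈ S.erase v := Finset.mem_erase.2 ⟨hvu.ne', huS⟩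
          have hB : ∑ x ∈ S.erase v, b x
              = ∑ x ∈ S.erase v, Function.update b u (b u - 1) x + 1 := by
            rw [← Finset.add_sum_erase _ _ huS', ← Finset.add_sum_erase _ _ huS']
            rw [Function.update_self]
            have : ∑ x ∈ (S.erase v).erase u, Function.update b u (b u - 1) x
                = ∑ x ∈ (S.erase v).erase u, b x := by
              refine Finset.sum_congr rfl fun x hx => ?_
              rw [Function.update_of_ne (Finset.ne_of_mem_erase hx)]
            omega
          have hC : {e ∈ F.edgeSet | ∀ x ∈ S.erase v, x ∉ e}.ncard
              ≤ {e ∈ F'.edgeSet | ∀ x ∈ S.erase v, x ∉ e}.ncard := by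
            refine Set.ncard_le_ncard ?_ (Set.toFinite _)
            rintro e ⟨he, hne⟩
            refine ⟨?_, hne⟩
            rw [hes]
            refine ⟨he, ?_⟩
            rintro rfl
            exact hne u huS' (by simp)
          omega
        · have hB : ∑ x ∈ S.erase v, b x
              = ∑ x ∈ S.erase v, Function.update b u (b u - 1) x := by
            refine Finset.sum_congr rfl fun x hx => ?_
            rw [Function.update_of_ne]
            rintro rfl
            exact huS (Finset.mem_of_mem_erase hx)
          have hC : {e ∈ F.edgeSet | ∀ x ∈ S.erase v, x ∉ e}.ncard
              ≤ {e ∈ F'.edgeSet | ∀ x ∈ S.erase v, x ∉ e}.ncard + 1 := by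
            refine le_trans (Set.ncard_le_ncard (t := insert s(v, u)
              {e ∈ F'.edgeSet | ∀ x ∈ S.erase v, x ∉ e}) ?_ (Set.toFinite _))
              (Set.ncard_insert_le _ _)
            rintro e ⟨he, hne⟩
            by_cases heq : e = s(v, u)
            · exact Or.inl heq
            · refine Or.inr ⟨?_, hne⟩
              rw [hes]
              exact ⟨he, heq⟩
          omega


/-- edges avoiding `S`. -/
def avoid {n : ℕ} (T : SimpleGraph (Fin n)) (S : Finset (Fin n)) : Set (Sym2 (Fin n)) :=
  {e ∈ T.edgeSet | ∀ v ∈ S, v ∉ e}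

lemma fT_eq {n : ℕ} (T : SimpleGraph (Fin n)) (hT : T.IsTree) (S : Finset (Fin n)) :
    fT T S = (n : ℤ) - (avoid T S).ncard - 2 * S.card := by
  have h1 : (ETset T S).ncard + (avoid T S).ncard = T.edgeSet.ncard := by
    rw [← Set.ncard_union_eq _ (Set.toFinite _) (Set.toFinite _)]
    · congr 1
      ext e
      simp only [ETset, avoid, Set.mem_union, Set.mem_setOf_eq]
      constructor
      · rintro (h | h) <;> exact h.1
      · intro h
        by_cases h' : ∃ v ∈ S, v ∈ e
        · exact Or.inl ⟨h, h'⟩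
        · push Not at h'
          exact Or.inr ⟨h, h'⟩
    · rw [Set.disjoint_left]
      rintro e ⟨_, v, hv, hve⟩ ⟨_, h⟩
      exact h v hv hve
  have h2 : T.edgeSet.ncard + 1 = n := by
    classical
    have := hT.card_edgeFinset
    rw [Fintype.card_fin] at this
    rw [← Set.ncard_coe_finset, coe_edgeFinset] at this
    exact this
  unfold fT
  omega

lemma card_comp_induce {n : ℕ} (T : SimpleGraph (Fin n)) (hT : T.IsTree) (s : Finset (Fin n)) :
    Nat.card (T.induce (↑s : Set (Fin n))).ConnectedComponent + (avoid T sᶜ).ncard = s.card := by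
  have h := card_comp (T.induce (↑s : Set (Fin n))) (hT.isAcyclic.induce _)
  have h1 : Nat.card (↑s : Set (Fin n)) = s.card := by simp
  rw [h1] at h
  rw [← h]
  congr 1
  rw [← Set.ncard_image_of_injective _ (Sym2.map.injective (Subtype.val_injective (p := fun x => x ∈ (↑s : Set (Fin n)))))]
  congr 1
  ext e
  induction e with
  | _ a b =>
  constructor
  · rintro ⟨he, hS⟩
    have ha : a ∈ s := by
      by_contra ha
      exact hS a (by simpa using ha) (by simp)
    have hb : b ∈ s := by
      by_contra hb
      exact hS b (by simpa using hb) (by simp)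
    exact ⟨s(⟨a, ha⟩, ⟨b, hb⟩), he, rfl⟩
  · rintro ⟨e', he', heq⟩
    induction e' with
    | _ x y =>
    rw [Sym2.map_mk] at heq
    rw [← heq]
    refine ⟨he', fun v hv hve => ?_⟩
    rw [Finset.mem_compl] at hv
    rcases Sym2.mem_iff.1 hve with rfl | rfl
    · exact hv x.2
    · exact hv y.2

lemma cover_lower {n : ℕ} (T : SimpleGraph (Fin n)) (hT : T.IsTree) (S : Finset (Fin n))
    (P : Finset (Finset (Fin n))) (hP : ∀ s ∈ P, IsPathSet T s)
    (hU : ∀ v : Fin n, ∃! s, s ∈ P ∧ v ∈ s) :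
    n ≤ P.card + (avoid T S).ncard + 2 * S.card := by
  classical
  let H : SimpleGraph (Fin n) :=
    { Adj := fun u v => T.Adj u v ∧ ∃ s ∈ P, u ∈ s ∧ v ∈ s
      symm := ⟨fun u v h => ⟨h.1.symm, by
        obtain ⟨s, hs, h1, h2⟩ := h.2
        exact ⟨s, hs, h2, h1⟩⟩⟩
      loopless := ⟨fun u h => h.1.ne rfl⟩ }
  have hHT : H ≤ T := fun u v h => h.1
  have hc := card_comp H (hT.isAcyclic.anti hHT)
  rw [Nat.card_eq_fintype_card (α := Fin n), Fintype.card_fin] at hc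
  have hdeg : ∀ v, (H.neighborSet v).ncard ≤ 2 := by
    intro v
    obtain ⟨s, ⟨hs, hvs⟩, huniq⟩ := hU v
    obtain ⟨m, ⟨φ⟩⟩ := hP s hs
    have hmem : ∀ w, H.Adj v w → w ∈ s := by
      rintro w ⟨_, s', hs', hv', hw'⟩
      rwa [← huniq s' ⟨hs', hv'⟩]
    let k : ℕ := (φ ⟨v, hvs⟩ : Fin m)
    let g : Fin n → ℕ := fun w => if h : w ∈ s then (φ ⟨w, h⟩ : Fin m) else 0
    have : (H.neighborSet v).ncard ≤ ({k - 1, k + 1} : Set ℕ).ncard := by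
      refine Set.ncard_le_ncard_of_injOn g ?_ ?_ (Set.toFinite _)
      · intro w hw
        have hws := hmem w hw
        have hadj : (T.induce (↑s : Set (Fin n))).Adj ⟨v, hvs⟩ ⟨w, hws⟩ := hw.1
        have h2 := pathGraph_adj.1 (φ.map_rel_iff.2 hadj)
        simp only [g, hws, dif_pos, Set.mem_insert_iff, Set.mem_singleton_iff, k]
        rcases h2 with h2 | h2
        · right; exact h2.symm
        · left; exact Nat.eq_sub_of_add_eq h2
      · intro a ha b hb hab
        have has := hmem a ha
        have hbs := hmem b hb
        simp only [g, has, hbs, dif_pos] at hab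
        have := φ.injective (Fin.ext hab)
        exact congrArg Subtype.val this
    refine this.trans ((Set.ncard_insert_le _ _).trans ?_)
    simp
  have hcomp : Nat.card H.ConnectedComponent ≤ P.card := by
    have hf : ∀ c : H.ConnectedComponent, ∃ s : P, c.out ∈ s.1 := by
      intro c
      obtain ⟨s, ⟨hs, hvs⟩, -⟩ := hU c.out
      exact ⟨⟨s, hs⟩, hvs⟩
    choose f hf using hf
    have hinj : Function.Injective f := by
      intro c d hcd
      have h1 := hf c
      have h2 := hf d
      rw [← hcd] at h2
      obtain ⟨m, ⟨φ⟩⟩ := hP (f c).1 (f c).2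
      have hpre : (T.induce (↑(f c).1 : Set (Fin n))).Preconnected :=
        φ.symm.preconnected_iff.1 (pathGraph_preconnected m)
      have hr := hpre ⟨c.out, h1⟩ ⟨d.out, h2⟩
      let ψ : T.induce (↑(f c).1 : Set (Fin n)) →g H :=
        ⟨Subtype.val, fun {a b} hab => ⟨hab, (f c).1, (f c).2, a.2, b.2⟩⟩
      have hr' : H.Reachable c.out d.out := hr.map ψ
      have := ConnectedComponent.eq.2 hr'
      rw [← Quot.out_eq c, ← Quot.out_eq d]
      exact this
    have := Nat.card_le_card_of_injective f hinj
    simpa using this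
  have hedge : H.edgeSet.ncard ≤ (avoid T S).ncard + 2 * S.card := by
    have hsub : H.edgeSet ⊆ avoid T S ∪ ⋃ v ∈ S, (fun w => s(v, w)) '' H.neighborSet v := by
      intro e he
      by_cases h : ∃ v ∈ S, v ∈ e
      · right
        obtain ⟨v, hv, hve⟩ := h
        obtain ⟨z, rfl⟩ := Sym2.mem_iff_exists.1 hve
        simp only [Set.mem_iUnion]
        exact ⟨v, hv, z, he, rfl⟩
      · left
        push Not at h
        exact ⟨edgeSet_mono hHT he, h⟩
    refine (Set.ncard_le_ncard hsub (Set.toFinite _)).trans ((Set.ncard_union_le _ _).trans ?_)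
    gcongr
    refine (Finset.set_ncard_biUnion_le _ _).trans ?_
    rw [mul_comm, ← smul_eq_mul]
    refine Finset.sum_le_card_nsmul _ _ _ fun v _ => ?_
    exact (Set.ncard_image_le (Set.toFinite _)).trans (hdeg v)
  omega

lemma cover_upper {n : ℕ} (T : SimpleGraph (Fin n)) (hT : T.IsTree) (H : SimpleGraph (Fin n))
    (hHT : H ≤ T) (hd : ∀ v, (H.neighborSet v).ncard ≤ 2) :
    ∃ P : Finset (Finset (Fin n)), P.card ≤ Nat.card H.ConnectedComponent ∧
      (∀ s ∈ P, IsPathSet T s) ∧ ∀ v : Fin n, ∃! s, s ∈ P ∧ v ∈ s := by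
  classical
  refine ⟨Finset.univ.image fun c : H.ConnectedComponent => c.supp.toFinset, ?_, ?_, ?_⟩
  · rw [Nat.card_eq_fintype_card]
    exact Finset.card_image_le
  · intro s hs
    obtain ⟨c, -, rfl⟩ := Finset.mem_image.1 hs
    unfold IsPathSet
    rw [Set.coe_toFinset]
    have heq : T.induce c.supp = H.induce c.supp := by
      ext a b
      refine ⟨fun h => ?_, fun h => hHT h⟩
      have hab : T.Adj a b := h
      by_contra hn
      have hn' : ¬ H.Adj a b := hn
      have hr : H.Reachable a b := by
        rw [← ConnectedComponent.eq]
        exact a.2.trans b.2.symm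
      have hbr := isAcyclic_iff_forall_adj_isBridge.1 hT.isAcyclic hab
      rw [isBridge_iff] at hbr
      refine hbr (hr.mono ?_)
      intro x y hxy
      rw [deleteEdges_adj]
      refine ⟨hHT hxy, fun hmem => ?_⟩
      have h2 : s(x, y) ∈ H.edgeSet := hxy
      rw [Set.mem_singleton_iff.1 hmem] at h2
      exact hn' h2
    rw [heq]
    have ht : (H.induce c.supp).IsTree := (hT.isAcyclic.anti hHT).isTree_connectedComponent c
    refine iso_path _ ht fun v => ?_
    refine le_trans (Set.ncard_le_ncard_of_injOn (t := H.neighborSet v) Subtype.val ?_ ?_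
      (Set.toFinite _)) (hd v)
    · intro w hw
      exact hw
    · exact Subtype.val_injective.injOn
  · intro v
    refine ⟨(H.connectedComponentMk v).supp.toFinset, ⟨?_, ?_⟩, ?_⟩
    · exact Finset.mem_image_of_mem _ (Finset.mem_univ _)
    · simp
    · rintro s ⟨hs, hv⟩
      obtain ⟨c, -, rfl⟩ := Finset.mem_image.1 hs
      rw [Set.mem_toFinset, ConnectedComponent.mem_supp_iff] at hv
      rw [hv]

end TPC

/-- For a tree T, P(T) = max over S of f_T(S), and this also equals
max over 0 ≤ k ≤ n of (M_k(T) − k). -/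
theorem stmt11 {n : ℕ} (T : SimpleGraph (Fin n)) (hT : T.IsTree) :
    (∀ S : Finset (Fin n), fT T S ≤ (pathCoverNumber T : ℤ)) ∧
      (∃ S : Finset (Fin n), fT T S = (pathCoverNumber T : ℤ)) ∧
      (∀ k : ℕ, k ≤ n → (MD T k : ℤ) - k ≤ (pathCoverNumber T : ℤ)) ∧
      (∃ k : ℕ, k ≤ n ∧ (MD T k : ℤ) - k = (pathCoverNumber T : ℤ)) := by
  classical
  obtain ⟨H, hHT, S, hd, hS⟩ := TPC.matching T.edgeSet.ncard T hT.isAcyclic rfl (fun _ => 2)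
  obtain ⟨P, hPc, hP, hU⟩ := TPC.cover_upper T hT H hHT hd
  have hle : pathCoverNumber T ≤ P.card := Nat.sInf_le ⟨P, rfl, hP, hU⟩
  obtain ⟨Q, hQc, hQ, hQU⟩ := Nat.sInf_mem
    (s := {p | ∃ P : Finset (Finset (Fin n)), P.card = p ∧ (∀ s ∈ P, IsPathSet T s) ∧
      ∀ v : Fin n, ∃! s, s ∈ P ∧ v ∈ s}) ⟨_, P, rfl, hP, hU⟩
  have hQc' : Q.card = pathCoverNumber T := hQc
  have hlow : ∀ S : Finset (Fin n), fT T S ≤ (pathCoverNumber T : ℤ) := by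
    intro S
    have := TPC.cover_lower T hT S Q hQ hQU
    rw [TPC.fT_eq T hT]
    omega
  have hEq : fT T S = (pathCoverNumber T : ℤ) := by
    refine le_antisymm (hlow S) ?_
    rw [TPC.fT_eq T hT]
    have h1 := TPC.card_comp H (hT.isAcyclic.anti hHT)
    rw [Nat.card_eq_fintype_card (α := Fin n), Fintype.card_fin] at h1
    have h2 : S.card * 2 + (TPC.avoid T S).ncard ≤ H.edgeSet.ncard := by
      simpa [TPC.avoid] using hS
    omega
  have hcomp : ∀ s : Finset (Fin n),
      (Nat.card (SimpleGraph.induce (↑s : Set (Fin n)) T).ConnectedComponent : ℤ)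
        = fT T sᶜ + sᶜ.card := by
    intro s
    have h1 := TPC.card_comp_induce T hT s
    rw [TPC.fT_eq T hT]
    have h2 := s.card_add_card_compl
    rw [Fintype.card_fin] at h2
    omega
  have hmd : ∀ k : ℕ, k ≤ n → (MD T k : ℤ) - k ≤ (pathCoverNumber T : ℤ) := by
    intro k hk
    have : MD T k ≤ pathCoverNumber T + k := by
      refine Finset.sup_le fun s hs => ?_
      have hs' : s.card = n - k := (Finset.mem_filter.1 hs).2
      have h1 := hcomp s
      have h2 := hlow sᶜ
      have h3 := s.card_add_card_compl
      rw [Fintype.card_fin] at h3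
      omega
    omega
  refine ⟨hlow, ⟨S, hEq⟩, hmd, S.card, ?_, le_antisymm (hmd _ ?_) ?_⟩
  · simpa using S.card_le_univ
  · simpa using S.card_le_univ
  · have h1 := hcomp Sᶜ
    rw [compl_compl, hEq] at h1
    have h2 : Nat.card (SimpleGraph.induce (↑(Sᶜ) : Set (Fin n)) T).ConnectedComponent
        ≤ MD T S.card := by
      unfold MD
      refine Finset.le_sup (f := fun s : Finset (Fin n) =>
        Nat.card (SimpleGraph.induce (↑s : Set (Fin n)) T).ConnectedComponent) (b := Sᶜ) ?_
      simp [Finset.card_compl]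
    omega
end

section
/- Let G be a graph with a pendant vertex v whose deletion leaves G − v. If (i,j) is the partial inertia of some matrix in S(G − v), then both (i+1, j) and (i, j+1) are partial inertias of matrices in S(G). -/
open Matrix

lemma inertia_of_squares {m : ℕ} (q : (Fin m → ℝ) → ℝ) (w w' : Fin m → ℝ)
    (f g : (Fin m → ℝ) →ₗ[ℝ] (Fin m → ℝ))
    (hf : Function.Injective f) (hg : Function.Injective g)
    (h : ∀ x, q x = ∑ i, w i * (f x i * f x i))
    (h' : ∀ x, q x = ∑ i, w' i * (g x i * g x i)) :
    (Finset.univ.filter fun i => 0 < w i).card = (Finset.univ.filter fun i => 0 < w' i).card ∧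
    (Finset.univ.filter fun i => w i < 0).card = (Finset.univ.filter fun i => w' i < 0).card := by
  have e : QuadraticMap.Equivalent (QuadraticMap.weightedSumSquares ℝ w)
      (QuadraticMap.weightedSumSquares ℝ w') := by
    refine ⟨⟨(LinearEquiv.ofInjectiveEndo f hf).symm.trans (LinearEquiv.ofInjectiveEndo g hg), ?_⟩⟩
    intro y
    obtain ⟨x, rfl⟩ := (LinearEquiv.ofInjectiveEndo f hf).surjective y
    have := (h' x).symm.trans (h x)
    change QuadraticMap.weightedSumSquares ℝ w' ((LinearEquiv.ofInjectiveEndo g hg)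
      ((LinearEquiv.ofInjectiveEndo f hf).symm ((LinearEquiv.ofInjectiveEndo f hf) x))) = _
    rw [LinearEquiv.symm_apply_apply]
    simpa [QuadraticMap.weightedSumSquares_apply] using this
  have e1 := e.sigPos_eq
  have e2 := e.sigNeg_eq
  rw [QuadraticForm.sigPos_weightedSumSquares, QuadraticForm.sigPos_weightedSumSquares] at e1
  rw [QuadraticForm.sigNeg_weightedSumSquares, QuadraticForm.sigNeg_weightedSumSquares] at e2
  constructor
  · rw [← Set.ncard_coe_finset, ← Set.ncard_coe_finset]; simpa using e1
  · rw [← Set.ncard_coe_finset, ← Set.ncard_coe_finset]; simpa using e2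

lemma spectral_squares {m : ℕ} {A : Matrix (Fin m) (Fin m) ℝ} (hA : A.IsHermitian) :
    ∃ f : (Fin m → ℝ) →ₗ[ℝ] (Fin m → ℝ), Function.Injective f ∧
      ∀ x, x ⬝ᵥ (A *ᵥ x) = ∑ i, hA.eigenvalues i * (f x i * f x i) := by
  set U : Matrix (Fin m) (Fin m) ℝ := (hA.eigenvectorUnitary : Matrix (Fin m) (Fin m) ℝ) with hU
  have hs : A = U * diagonal hA.eigenvalues * Uᵀ := by
    have := hA.spectral_theorem
    rw [Unitary.conjStarAlgAut_apply] at this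
    exact this
  have hUU : U * Uᵀ = 1 := Unitary.coe_mul_star_self hA.eigenvectorUnitary
  refine ⟨Matrix.mulVecLin Uᵀ, ?_, ?_⟩
  · intro x y hxy
    have := congrArg (fun z => U *ᵥ z) hxy
    simpa only [mulVecLin_apply, mulVec_mulVec, hUU, one_mulVec] using this
  · intro x
    have : x ⬝ᵥ (A *ᵥ x) = (Uᵀ *ᵥ x) ⬝ᵥ (diagonal hA.eigenvalues *ᵥ (Uᵀ *ᵥ x)) := by
      conv_lhs => rw [hs]
      rw [← mulVec_mulVec, ← mulVec_mulVec, dotProduct_mulVec, mulVec_transpose]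
    rw [this]
    simp only [dotProduct, mulVec_diagonal, mulVecLin_apply]
    exact Finset.sum_congr rfl fun i _ => by ring

lemma pendant_extend {n : ℕ} (G : SimpleGraph (Fin (n + 1))) (v : Fin (n + 1))
    (hpend : ∃! w : Fin (n + 1), G.Adj v w) (B : Matrix (Fin n) (Fin n) ℝ)
    (hB : SMat (G.comap v.succAbove) B) (hBh : B.IsHermitian) (c : ℝ) (hc : c ≠ 0) :
    ∃ A : Matrix (Fin (n + 1)) (Fin (n + 1)) ℝ, SMat G A ∧ ∃ hA : A.IsHermitian,
      posIn hA = (if 0 < c then 1 else 0) + posIn hBh ∧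
      negIn hA = (if c < 0 then 1 else 0) + negIn hBh := by
  obtain ⟨w, hw, huniq⟩ := hpend
  obtain ⟨k, rfl⟩ := Fin.exists_succAbove_eq hw.ne'
  let e : Fin n → ℝ := Pi.single k 1
  let A : Matrix (Fin (n + 1)) (Fin (n + 1)) ℝ := fun a b =>
    v.insertNth (α := fun _ => ℝ) (v.insertNth (α := fun _ => ℝ) c (fun l => c * e l) b)
      (fun i => v.insertNth (α := fun _ => ℝ) (c * e i) (fun l => B i l + c * (e i * e l)) b) a
  have A1 : A v v = c := by simp [A]
  have A2 : ∀ l, A v (v.succAbove l) = c * e l := by simp [A]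
  have A3 : ∀ l, A (v.succAbove l) v = c * e l := by simp [A]
  have A4 : ∀ i l, A (v.succAbove i) (v.succAbove l) = B i l + c * (e i * e l) := by simp [A]
  have hsymm : A.IsSymm := by
    ext a b
    rw [transpose_apply]
    refine Fin.succAboveCases v ?_ (fun i => ?_) a <;> refine Fin.succAboveCases v ?_ (fun l => ?_) b
    · rfl
    · rw [A2, A3]
    · rw [A2, A3]
    · rw [A4, A4, ← hB.1.apply i l]; ring
  have hAh : A.IsHermitian := by
    rw [Matrix.IsHermitian, Matrix.conjTranspose_eq_transpose_of_trivial]; exact hsymm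
  have hadj : ∀ l, c * e l ≠ 0 ↔ G.Adj v (v.succAbove l) := by
    intro l
    by_cases hl : l = k
    · subst hl; simpa [e, hc] using hw
    · have : ¬ G.Adj v (v.succAbove l) := fun h => hl (Fin.succAbove_right_injective (huniq _ h))
      simp [e, hl, this]
  refine ⟨A, ⟨hsymm, ?_⟩, hAh, ?_⟩
  · intro a b
    refine Fin.succAboveCases v ?_ (fun i => ?_) a <;> refine Fin.succAboveCases v ?_ (fun l => ?_) b
    · intro h; exact absurd rfl h
    · intro _; rw [A2]; exact hadj l
    · intro _; rw [A3, G.adj_comm]; exact hadj i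
    · intro h
      have hil : i ≠ l := fun h' => h (by rw [h'])
      have : e i * e l = 0 := by
        by_cases hi : i = k
        · have : l ≠ k := fun h' => hil (hi.trans h'.symm)
          simp [e, this]
        · simp [e, hi]
      rw [A4, this, mul_zero, add_zero]
      exact hB.2 i l hil
  · obtain ⟨f, hf, hfq⟩ := spectral_squares hBh
    obtain ⟨g, hg, hgq⟩ := spectral_squares hAh
    let r : (Fin (n + 1) → ℝ) →ₗ[ℝ] (Fin n → ℝ) := LinearMap.funLeft ℝ ℝ v.succAbove
    let F : (Fin (n + 1) → ℝ) →ₗ[ℝ] (Fin (n + 1) → ℝ) :=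
      { toFun := fun x => Fin.cons (x v + x (v.succAbove k)) (f (r x))
        map_add' := by
          intro x y
          ext a
          refine Fin.cases ?_ (fun i => ?_) a
          · simp; ring
          · simp
        map_smul' := by
          intro t x
          ext a
          refine Fin.cases ?_ (fun i => ?_) a
          · simp; ring
          · simp }
    have F0 : ∀ x, F x 0 = x v + x (v.succAbove k) := fun x => rfl
    have FS : ∀ x i, F x (Fin.succ i) = f (r x) i := fun x i => rfl
    have hF : Function.Injective F := by
      intro x y hxy
      have h1 : r x = r y := hf (by ext i; rw [← FS, ← FS, hxy])
      have h2 : ∀ i, x (v.succAbove i) = y (v.succAbove i) := fun i => congrFun h1 i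
      have h3 : F x 0 = F y 0 := by rw [hxy]
      rw [F0, F0, h2] at h3
      ext a
      refine Fin.succAboveCases v ?_ (fun i => ?_) a
      · linarith
      · exact h2 i
    have hq : ∀ x, x ⬝ᵥ (A *ᵥ x) = ∑ i, (Fin.cons c hBh.eigenvalues : Fin (n + 1) → ℝ) i *
        (F x i * F x i) := by
      intro x
      rw [Fin.sum_univ_succ]
      simp only [Fin.cons_zero, Fin.cons_succ, F0, FS]
      rw [← hfq]
      have hr : ∀ i, r x i = x (v.succAbove i) := fun i => rfl
      have he : ∑ i, e i * x (v.succAbove i) = x (v.succAbove k) := by simp [e, Pi.single_apply]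
      simp only [dotProduct, mulVec, Fin.sum_univ_succAbove _ v, A1, A2, A3, A4, hr, add_mul,
        mul_add, Finset.sum_add_distrib]
      have s1 : ∑ i, c * e i * x (v.succAbove i) = c * x (v.succAbove k) := by
        rw [← he, Finset.mul_sum]; exact Finset.sum_congr rfl fun i _ => by ring
      have s2 : ∑ i, x (v.succAbove i) * (c * e i * x v) = c * x (v.succAbove k) * x v := by
        rw [← s1, Finset.sum_mul]; exact Finset.sum_congr rfl fun i _ => by ring
      have s3 : ∑ i, x (v.succAbove i) * ∑ l, c * (e i * e l) * x (v.succAbove l)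
          = c * x (v.succAbove k) * x (v.succAbove k) := by
        rw [← s1, Finset.sum_mul]
        refine Finset.sum_congr rfl fun i _ => ?_
        conv_rhs => rw [← he]
        rw [Finset.mul_sum, Finset.mul_sum]
        exact Finset.sum_congr rfl fun l _ => by ring
      rw [s1, s2, s3]
      ring
    obtain ⟨p1, p2⟩ := inertia_of_squares _ _ _ g F hg hF hgq hq
    unfold posIn negIn
    rw [p1, p2, Fin.card_filter_univ_succ, Fin.card_filter_univ_succ]
    simp only [Fin.cons_zero, Fin.cons_succ, Function.comp_def]
    constructor <;> split_ifs <;> omega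

/-- If v is a pendant vertex of G and (i,j) is attained in S(G − v), then both
(i+1, j) and (i, j+1) are attained in S(G). -/
theorem stmt18 {n : ℕ} (G : SimpleGraph (Fin (n + 1))) (v : Fin (n + 1))
    (hpend : ∃! w : Fin (n + 1), G.Adj v w) (i j : ℕ)
    (h : ∃ B : Matrix (Fin n) (Fin n) ℝ,
      SMat (G.comap v.succAbove) B ∧ HasInertia B i j) :
    (∃ A : Matrix (Fin (n + 1)) (Fin (n + 1)) ℝ, SMat G A ∧ HasInertia A (i + 1) j) ∧
      ∃ A : Matrix (Fin (n + 1)) (Fin (n + 1)) ℝ, SMat G A ∧ HasInertia A i (j + 1) := by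
  obtain ⟨B, hB, hBh, rfl, rfl⟩ := h
  obtain ⟨A, hA, hAh, h1, h2⟩ := pendant_extend G v hpend B hB hBh 1 one_ne_zero
  obtain ⟨A', hA', hAh', h1', h2'⟩ := pendant_extend G v hpend B hB hBh (-1) (by norm_num)
  norm_num at h1 h2 h1' h2'
  exact ⟨⟨A, hA, hAh, by omega, by omega⟩, ⟨A', hA', hAh', by omega, by omega⟩⟩
end
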